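/- arXiv:2305.17014 — 8 statements merged into one kernel-verified Lean document; each statement's English description precedes it below -/
import Mathlib

section
/- For every prime power q ≥ 3 there exists a bipartite egr(2q²−2, q, 6, (q−1)(q²−3q+3)) graph, and moreover every bipartite egr(n, q, 6, (q−1)(q²−3q+3)) graph satisfies n ≥ 2q²−2; that is, the incidence graph of a biaffine plane of order q of type 2 is an extremal bipartite edge-girth-regular graph with these parameters. -/
/-!
*Reduction to counting.* A 6-cycle through an edge `u v` is a tuple `(a, b, c, d)` such that
`u v a b c d` is a hexagon, and each hexagon gives two closed walks at `u` (`card_cycles`). For a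
bipartite graph, girth at least 6 just means that there are no 4-cycles, i.e. that two vertices
have at most one common neighbour (`NoC4`).

*Lower bound* (`half_bound`, `lower_bound`). Fix a vertex `u`. There are `q (q - 1) ^ 3`
non-backtracking walks `u v a b c`. If `c` is at distance two from `u`, with middle vertex `d`, then
`u v a b c d` is a hexagon, so at most `q λ` of the walks are of this kind. None returns to `u`.
Any other vertex `c` ends at most `q (q - 1)` of the walks, since `b` is determined by `a` and `c`.
With `λ = (q - 1) (q² - 3 q + 3)` this leaves at least `q - 2` further vertices `c`, so the colour
class of `u` has at least `1 + q (q - 1) + (q - 2) = q² - 1` vertices. This applies to both classes.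

*Existence* (`biaff_isEGR`). Over the field `F` with `q` elements, deleting the origin and the line at
infinity leaves as points the nonzero vectors `x` and as lines the sets `{x | y ⬝ x = 1}` for nonzero
`y`. The hexagons through an edge are parametrized by nonzero scalars `t, r, s` with
`s (1 + t r) ≠ t` (`card_hex`); the excluded triples correspond to pairs of distinct nonzero `t, s`,
whence their number is `(q - 1) ^ 3 - (q - 1) (q - 2) = λ` (`card_par`).
-/

open SimpleGraph

/-- `G` is an edge-girth-regular graph with parameters `(n, k, g, lam)`:
a finite simple graph on `n` vertices, `k`-regular, of girth `g`, in which every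
edge lies on exactly `lam` cycles of length `g` (each such cycle corresponds to
exactly two closed walks based at an endpoint of the edge and traversing it). -/
def SimpleGraph.IsEGR {V : Type*} (G : SimpleGraph V) (n k g lam : ℕ) : Prop :=
  Finite V ∧ Nat.card V = n ∧
    (∀ v : V, (G.neighborSet v).ncard = k) ∧
    G.egirth = (g : ℕ∞) ∧
    ∀ u v : V, G.Adj u v →
      Nat.card {p : G.Walk u u // p.IsCycle ∧ p.length = g ∧ s(u, v) ∈ p.edges} = 2 * lam

/-- The number of closed walks of length `l` based at `v`. -/
noncomputable def SimpleGraph.closedWalkCount {V : Type*} (G : SimpleGraph V) (v : V) (l : ℕ) : ℕ :=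
  Nat.card {p : G.Walk v v // p.length = l}

/-- The number of cycle-free closed walks of length `l` based at `v`,
i.e. closed walks whose traversed edges form an acyclic subgraph. -/
noncomputable def SimpleGraph.cycleFreeClosedWalkCount {V : Type*} (G : SimpleGraph V) (v : V)
    (l : ℕ) : ℕ :=
  Nat.card {p : G.Walk v v // p.length = l ∧ p.toSubgraph.coe.IsAcyclic}

/-! ### Hexagons and 4-cycles -/

/-- The vertices `u, v, a, b, c, d` form, in this cyclic order, a hexagon through the edge `u v`
(which is not itself part of the condition). -/
structure IsHex {V : Type} (G : SimpleGraph V) (u v a b c d : V) : Prop where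
  va : G.Adj v a
  ab : G.Adj a b
  bc : G.Adj b c
  cd : G.Adj c d
  du : G.Adj d u
  ua : u ≠ a
  ub : u ≠ b
  uc : u ≠ c
  vb : v ≠ b
  vc : v ≠ c
  vd : v ≠ d
  ac : a ≠ c
  ad : a ≠ d
  bd : b ≠ d

/-- The hexagons through the oriented edge `u v`, written as the remaining vertices
`(a, b, c, d)` of the cycle `u v a b c d`. -/
abbrev HexType {V : Type} (G : SimpleGraph V) (u v : V) : Type :=
  {x : V × V × V × V // IsHex G u v x.1 x.2.1 x.2.2.1 x.2.2.2}

/-- The closed walk at `u` running around a hexagon, starting with the edge `u v`. -/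
def hexWalk {V : Type} {G : SimpleGraph V} {u v a b c d : V} (huv : G.Adj u v)
    (h : IsHex G u v a b c d) : G.Walk u u :=
  .cons huv (.cons h.va (.cons h.ab (.cons h.bc (.cons h.cd (.cons h.du .nil)))))

lemma hexWalk_isCycle {V : Type} {G : SimpleGraph V} {u v a b c d : V} (huv : G.Adj u v)
    (h : IsHex G u v a b c d) : (hexWalk huv h).IsCycle := by
  have e0 := huv.ne
  obtain ⟨h1, h2, h3, h4, h5, d1, d2, d3, d4, d5, d6, d7, d8, d9⟩ := h
  have e1 := h1.ne
  have e2 := h2.ne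
  have e3 := h3.ne
  have e4 := h4.ne
  have e5 := h5.ne
  simp only [hexWalk, Walk.cons_isCycle_iff, Walk.isPath_def, Walk.support_cons, Walk.support_nil,
    Walk.edges_cons, Walk.edges_nil]
  simp
  grind

/-- Each hexagon through the edge `u v` gives exactly two closed walks at `u`. -/
lemma card_cycles {V : Type} {G : SimpleGraph V} {u v : V} (huv : G.Adj u v) :
    Nat.card {p : G.Walk u u // p.IsCycle ∧ p.length = 6 ∧ s(u, v) ∈ p.edges} =
      2 * Nat.card (HexType G u v) := by
  let f : Bool × HexType G u v →
      {p : G.Walk u u // p.IsCycle ∧ p.length = 6 ∧ s(u, v) ∈ p.edges} := fun y =>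
    if y.1 then ⟨hexWalk huv y.2.2, hexWalk_isCycle huv y.2.2, rfl, by simp [hexWalk]⟩
    else ⟨(hexWalk huv y.2.2).reverse, (hexWalk_isCycle huv y.2.2).reverse,
      by rw [Walk.length_reverse]; rfl, by rw [Walk.edges_reverse]; simp [hexWalk]⟩
  have hf : Function.Bijective f := by
    constructor
    · rintro ⟨i, x⟩ ⟨j, y⟩ hxy
      have key := congrArg (fun p => p.1.support) hxy
      obtain ⟨⟨a, b, c, d⟩, hx⟩ := x
      obtain ⟨⟨a', b', c', d'⟩, hy⟩ := y
      have h1 := hx.vd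
      have h2 := hy.vd
      cases i <;> cases j <;> simp [f, hexWalk] at key ⊢ <;> grind
    · rintro ⟨p, hp, hl, he⟩
      match p, hl with
      | .cons (v := x1) h0 (.cons (v := x2) h1 (.cons (v := x3) h2 (.cons (v := x4) h3
          (.cons (v := x5) h4 (.cons h5 .nil))))), _ =>
        have hs := hp.support_nodup
        simp at hs
        have hvx : v = x1 ∨ v = x5 := by
          simp at he
          grind
        rcases hvx with rfl | rfl
        · refine ⟨(true, ⟨(x2, x3, x4, x5), ?_⟩), rfl⟩
          constructor <;> dsimp only <;> first | assumption | grind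
        · refine ⟨(false, ⟨(x4, x3, x2, x1), ?_⟩), ?_⟩
          · constructor <;> dsimp only <;> first | (apply Adj.symm; assumption) | grind
          · simp [f, hexWalk]
  rw [← Nat.card_eq_of_bijective f hf, Nat.card_prod]
  simp

/-- The absence of 4-cycles: two distinct vertices have at most one common neighbour. -/
def NoC4 {V : Type} (G : SimpleGraph V) : Prop :=
  ∀ x y a b : V, G.Adj x a → G.Adj x b → G.Adj y a → G.Adj y b → x ≠ y → a = b

lemma noC4_of_egirth {V : Type} {G : SimpleGraph V} (h : G.egirth = (6 : ℕ∞)) : NoC4 G := by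
  intro x y a b hxa hxb hya hyb hxy
  by_contra hab
  have h6 := (SimpleGraph.le_egirth (n := 6)).1 h.ge x
    (.cons hxa (.cons hya.symm (.cons hyb (.cons hxb.symm .nil)))) (by
      have := hxa.ne
      have := hxb.ne
      have := hya.ne
      have := hyb.ne
      simp [Walk.cons_isCycle_iff, Walk.isPath_def]
      grind)
  simp at h6
  norm_cast at h6

lemma six_le_egirth {V : Type} {G : SimpleGraph V} (hc : G.Colorable 2) (h : NoC4 G) :
    (6 : ℕ∞) ≤ G.egirth := by
  refine (SimpleGraph.le_egirth (n := 6)).2 fun u p hp => ?_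
  have h3 := hp.three_le_length
  have hev : Even p.length := SimpleGraph.two_colorable_iff_forall_loop_even.1 hc u p
  have h4 : p.length ≠ 4 := by
    intro hl
    match p, hl with
    | .cons (v := x1) h0 (.cons (v := x2) h1 (.cons (v := x3) h2 (.cons h3 .nil))), _ =>
      have hs := hp.support_nodup
      simp at hs
      have := h u x2 x1 x3 h0 h3.symm h1.symm h2 (by grind)
      grind
  have : 6 ≤ p.length := by
    obtain ⟨k, hk⟩ := hev
    omega
  exact_mod_cast this

/-! ### The lower bound -/

/-- The half of a 2-coloured `q`-regular graph without 4-cycles containing `u` consists of `u`,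
the `q (q - 1)` vertices at distance two, and at least `m` others, where `m` is bounded below by
counting the non-backtracking walks `u v a b c` of length four.  Those whose end `c` is at
distance two from `u` close up to hexagons, so there are at most `q * L` of them; any other `c` is
the end of at most `q (q - 1)` of them. -/
lemma half_bound {V : Type} [Fintype V] [DecidableEq V] {G : SimpleGraph V} [DecidableRel G.Adj]
    {q L : ℕ} (col : V → Bool) (hcol : ∀ x y, G.Adj x y → col y = !col x) (h4 : NoC4 G)
    (hdeg : ∀ v, (G.neighborFinset v).card = q)
    (u : V) (hhex : ∀ v, G.Adj u v → Nat.card (HexType G u v) = L) :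
    ∃ m, q * (q - 1) * ((q - 1) * (q - 1)) ≤ q * L + q * (q - 1) * m ∧
      1 + q * (q - 1) + m ≤ (Finset.univ.filter fun x => col x = col u).card := by
  classical
  have herase : ∀ {x y : V}, G.Adj x y → ((G.neighborFinset x).erase y).card = q - 1 := by
    intro x y h
    rw [Finset.card_erase_of_mem (by simpa using h), hdeg]
  -- the walks `u v a` with `a ≠ u`
  let P : Finset (Σ _ : V, V) := (G.neighborFinset u).sigma fun v => (G.neighborFinset v).erase u
  -- the non-backtracking walks `u v a b c`
  let W : Finset (Σ _ : (Σ _ : V, V), Σ _ : V, V) :=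
    P.sigma fun x => ((G.neighborFinset x.2).erase x.1).sigma fun b =>
      (G.neighborFinset b).erase x.2
  have memP : ∀ v a, (⟨v, a⟩ : Σ _ : V, V) ∈ P ↔ G.Adj u v ∧ a ≠ u ∧ G.Adj v a := by
    intro v a
    simp [P]
  have memW : ∀ v a b c, (⟨⟨v, a⟩, b, c⟩ : Σ _ : (Σ _ : V, V), Σ _ : V, V) ∈ W ↔
      (G.Adj u v ∧ a ≠ u ∧ G.Adj v a) ∧ (b ≠ v ∧ G.Adj a b) ∧ c ≠ a ∧ G.Adj b c := by
    intro v a b c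
    simp [W, memP]
  have cardP : P.card = q * (q - 1) := by
    rw [Finset.card_sigma, Finset.sum_congr rfl (g := fun _ => q - 1), Finset.sum_const, hdeg,
      smul_eq_mul]
    intro v hv
    exact herase (by simpa using hv : G.Adj u v).symm
  have cardW : W.card = q * (q - 1) * ((q - 1) * (q - 1)) := by
    rw [Finset.card_sigma, Finset.sum_congr rfl (g := fun _ => (q - 1) * (q - 1)),
      Finset.sum_const, cardP, smul_eq_mul]
    rintro ⟨v, a⟩ hx
    rw [memP] at hx
    rw [Finset.card_sigma, Finset.sum_congr rfl (g := fun _ => q - 1), Finset.sum_const,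
      herase hx.2.2.symm, smul_eq_mul]
    intro b hb
    simp only [Finset.mem_erase, mem_neighborFinset] at hb
    exact herase hb.2.symm
  let A1 : Finset V := P.image fun x => x.2
  have memA1 : ∀ c, c ∈ A1 ↔ c ≠ u ∧ ∃ d, G.Adj u d ∧ G.Adj d c := by
    intro c
    simp only [A1, Finset.mem_image, Sigma.exists, memP]
    grind
  have cardA1 : A1.card = q * (q - 1) := by
    rw [Finset.card_image_of_injOn, cardP]
    rintro ⟨v, a⟩ h ⟨v', a'⟩ h' (rfl : a = a')
    rw [Finset.mem_coe, memP] at h h'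
    obtain rfl := h4 u a v v' h.1 h'.1 h.2.2.symm h'.2.2.symm h.2.1.symm
    rfl
  have hd : ∀ c, ∃ d, c ∈ A1 → G.Adj u d ∧ G.Adj d c := by
    intro c
    by_cases hc : c ∈ A1
    · obtain ⟨d, hd⟩ := ((memA1 c).1 hc).2
      exact ⟨d, fun _ => hd⟩
    · exact ⟨u, fun h => absurd h hc⟩
  choose dd hdd using hd
  let H : V → Finset (V × V × V × V) := fun v =>
    Finset.univ.filter fun x => IsHex G u v x.1 x.2.1 x.2.2.1 x.2.2.2
  have cardH : ∀ v, G.Adj u v → (H v).card = L := by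
    intro v hv
    rw [← hhex v hv, Nat.card_eq_fintype_card, Fintype.card_subtype]
  let W1 := W.filter fun w => w.2.2 ∈ A1
  let W2 := W.filter fun w => w.2.2 ∉ A1
  have hW : W1.card + W2.card = W.card := Finset.card_filter_add_card_filter_not _
  have hW1 : W1.card ≤ q * L := by
    have hS : ((G.neighborFinset u).sigma H).card = q * L := by
      rw [Finset.card_sigma, Finset.sum_congr rfl (g := fun _ => L), Finset.sum_const, hdeg,
        smul_eq_mul]
      intro v hv
      exact cardH v (by simpa using hv)
    rw [← hS]
    refine Finset.card_le_card_of_injOn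
      (fun w => ⟨w.1.1, (w.1.2, w.2.1, w.2.2, dd w.2.2)⟩) ?_ ?_
    · rintro ⟨⟨v, a⟩, b, c⟩ hw
      rw [Finset.mem_coe, Finset.mem_filter, memW] at hw
      obtain ⟨⟨⟨h1, h2, h3⟩, ⟨h5, h6⟩, h7, h8⟩, h9⟩ := hw
      dsimp only at h9
      obtain ⟨k1, k2⟩ := hdd c h9
      have k3 := ((memA1 c).1 h9).1
      have c1 := hcol _ _ h1
      have c2 := hcol _ _ h3
      have c3 := hcol _ _ h6
      have c4 := hcol _ _ h8
      have c5 := hcol _ _ k1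
      simp only [Finset.coe_sigma, Set.mem_sigma_iff, Finset.mem_coe, mem_neighborFinset, H,
        Finset.mem_filter, Finset.mem_univ, true_and]
      refine ⟨h1, h3, h6, h8, k2.symm, k1.symm, h2.symm, ?_, k3.symm, h5.symm, ?_, ?_, h7.symm,
        ?_, ?_⟩
      · rintro rfl
        simp [c2, c1] at c3
      · rintro rfl
        simp [c3, c2] at c4
      · intro h
        rw [← h] at k2
        exact h5 (h4 a c b v h6 h3.symm h8.symm k2.symm h7.symm)
      · intro h
        simp [← h, c2, c1] at c5
      · intro h
        rw [← h] at k1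
        exact h5 (h4 u a b v k1 h1 h6 h3.symm h2.symm)
    · rintro ⟨⟨v, a⟩, b, c⟩ - ⟨⟨v', a'⟩, b', c'⟩ - h
      simp only [Sigma.mk.injEq, heq_eq_eq, Prod.mk.injEq] at h ⊢
      tauto
  let A2 : Finset V := W2.image fun w => w.2.2
  have hW2 : W2.card ≤ q * (q - 1) * A2.card := by
    rw [← cardP, ← Finset.card_product]
    refine Finset.card_le_card_of_injOn (fun w => (w.1, w.2.2)) ?_ ?_
    · rintro w hw
      simp only [Finset.coe_product, Set.mem_prod, Finset.mem_coe]
      exact ⟨(Finset.mem_sigma.1 (Finset.mem_filter.1 hw).1).1, Finset.mem_image_of_mem _ hw⟩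
    · rintro ⟨⟨v, a⟩, b, c⟩ hw ⟨⟨v', a'⟩, b', c'⟩ hw' h
      rw [Finset.mem_coe, Finset.mem_filter, memW] at hw hw'
      simp only [Sigma.mk.injEq, heq_eq_eq, Prod.mk.injEq] at h
      obtain ⟨⟨rfl, rfl⟩, rfl⟩ := h
      obtain rfl := h4 a c b b' hw.1.2.1.2 hw'.1.2.1.2 hw.1.2.2.2.symm hw'.1.2.2.2.symm
        hw.1.2.2.1.symm
      rfl
  have memA2 : ∀ c ∈ A2, c ≠ u ∧ c ∉ A1 ∧ col c = col u := by
    intro c hc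
    obtain ⟨⟨⟨v, a⟩, b, c⟩, hw, rfl⟩ := Finset.mem_image.1 hc
    rw [Finset.mem_filter, memW] at hw
    obtain ⟨⟨⟨h1, h2, h3⟩, ⟨h5, h6⟩, h7, h8⟩, h9⟩ := hw
    refine ⟨?_, h9, ?_⟩
    · rintro h
      dsimp only at h
      rw [h] at h8
      exact h5 (h4 u a b v h8.symm h1 h6 h3.symm h2.symm)
    · have c1 := hcol _ _ h1
      have c2 := hcol _ _ h3
      have c3 := hcol _ _ h6
      have c4 := hcol _ _ h8
      simp [c4, c3, c2, c1]
  refine ⟨A2.card, by omega, ?_⟩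
  have hdis : Disjoint A1 A2 := Finset.disjoint_right.2 fun c hc => (memA2 c hc).2.1
  have hu : u ∉ A1 ∪ A2 := by
    intro h
    rcases Finset.mem_union.1 h with h | h
    · exact ((memA1 u).1 h).1 rfl
    · exact (memA2 u h).1 rfl
  have hcard : (insert u (A1 ∪ A2)).card = 1 + q * (q - 1) + A2.card := by
    rw [Finset.card_insert_of_notMem hu, Finset.card_union_of_disjoint hdis, cardA1]
    omega
  rw [← hcard]
  refine Finset.card_le_card fun x hx => ?_
  simp only [Finset.mem_filter, Finset.mem_univ, true_and]
  rcases Finset.mem_insert.1 hx with rfl | hx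
  · rfl
  rcases Finset.mem_union.1 hx with hx | hx
  · obtain ⟨-, d, h1, h2⟩ := (memA1 x).1 hx
    have c1 := hcol _ _ h1
    have c2 := hcol _ _ h2
    simp [c2, c1]
  · exact (memA2 x hx).2.2

lemma lower_bound {q : ℕ} (hq3 : 3 ≤ q) {n : ℕ} {V : Type} {G : SimpleGraph V}
    (hc : G.Colorable 2) (h : G.IsEGR n q 6 ((q - 1) * (q ^ 2 - 3 * q + 3))) :
    2 * q ^ 2 - 2 ≤ n := by
  classical
  obtain ⟨hfin, hn, hdeg, hg, hcyc⟩ := h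
  have := Fintype.ofFinite V
  have hg' : G.egirth = (6 : ℕ∞) := by exact_mod_cast hg
  obtain ⟨C⟩ := hc
  let col : V → Bool := fun x => decide (C x = 0)
  have hcol : ∀ x y, G.Adj x y → col y = !col x := by
    intro x y hxy
    have := C.valid hxy
    simp only [col]
    generalize C x = i at *
    generalize C y = j at *
    revert i j
    decide
  have hdeg' : ∀ v, (G.neighborFinset v).card = q := by
    intro v
    rw [← hdeg v, Set.ncard_eq_toFinset_card']
    rfl
  have key : ∀ u, q ^ 2 - 1 ≤ (Finset.univ.filter fun x => col x = col u).card := by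
    intro u
    obtain ⟨m, h1, h2⟩ := half_bound col hcol (noC4_of_egirth hg') hdeg' u
      (L := (q - 1) * (q ^ 2 - 3 * q + 3)) (by
        intro v hv
        have := hcyc u v hv
        rw [card_cycles hv] at this
        omega)
    obtain ⟨r, rfl⟩ : ∃ r, q = r + 3 := ⟨q - 3, by omega⟩
    have e1 : r + 3 - 1 = r + 2 := rfl
    have e2 : (r + 3) ^ 2 - 3 * (r + 3) + 3 = r ^ 2 + 3 * r + 3 := by
      have : (r + 3) ^ 2 = r ^ 2 + 3 * r + 3 * (r + 3) := by ring
      omega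
    rw [e1, e2] at h1
    rw [e1] at h2
    have hm : r + 1 ≤ m := by
      have h3 : (r + 3) * (r + 2) * ((r + 2) * (r + 2)) ≤
          (r + 3) * (r + 2) * (r ^ 2 + 3 * r + 3 + m) := by
        calc _ ≤ _ := h1
          _ = _ := by ring
      have h4 := Nat.le_of_mul_le_mul_left h3 (by positivity)
      nlinarith
    have : (r + 3) ^ 2 = (r + 3) * (r + 2) + r + 3 := by ring
    omega
  obtain ⟨u⟩ : Nonempty V := by
    by_contra hV
    rw [not_nonempty_iff] at hV
    have : G.egirth = ⊤ := by
      rw [egirth_eq_top]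
      intro v
      exact hV.elim v
    rw [this] at hg'
    exact absurd hg' (by simp)
  obtain ⟨v, hv⟩ : (G.neighborFinset u).Nonempty := by
    rw [← Finset.card_pos, hdeg']
    omega
  have huv := hcol u v (by simpa using hv)
  have hu := key u
  have hv := key v
  have hsplit := Finset.card_filter_add_card_filter_not (s := (Finset.univ : Finset V))
    (fun x => col x = col u)
  have hnot : (Finset.univ.filter fun x => ¬ col x = col u) =
      Finset.univ.filter fun x => col x = col v := by
    ext x
    simp only [huv, Finset.mem_filter, Finset.mem_univ, true_and]
    cases col x <;> cases col u <;> simp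
  rw [hnot, Finset.card_univ, ← Nat.card_eq_fintype_card, hn] at hsplit
  omega

/-! ### The biaffine plane of type 2 over a field -/

section Construction

variable {F : Type} [Field F]

/-- The dot product on `F × F`, encoding incidence of points and lines. -/
def dot (x y : F × F) : F := x.1 * y.1 + x.2 * y.2

/-- The determinant of two vectors of `F × F`. -/
def dt (x y : F × F) : F := x.1 * y.2 - x.2 * y.1

/-- The vector `x + t • d⊥`, where `d⊥ = (-d.2, d.1)`; as `t` varies it runs through the points
on the line with equation `dot d y = dot d x`. -/
def slide (x d : F × F) (t : F) : F × F := (x.1 - t * d.2, x.2 + t * d.1)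

lemma dot_comm' (x y : F × F) : dot x y = dot y x := by
  simp only [dot]
  ring

lemma dot_ne_zero {x y : F × F} (h : dot x y = 1) : y ≠ 0 := by
  rintro rfl
  simp [dot] at h

lemma dot_slide {x d : F × F} (t : F) : dot d (slide x d t) = dot d x := by
  simp only [dot, slide]
  ring

lemma dt_slide {x d : F × F} (h : dot d x = 1) (t : F) : dt x (slide x d t) = t := by
  simp only [dot, dt, slide] at *
  linear_combination t * h

lemma slide_dt {x d y : F × F} (h : dot d x = 1) (h' : dot d y = 1) :
    slide x d (dt x y) = y := by
  simp only [dot, dt, slide] at *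
  ext
  · linear_combination y.1 * h - x.1 * h'
  · linear_combination y.2 * h - x.2 * h'

lemma slide_inj {x d : F × F} (h : dot d x = 1) {s t : F} (hst : slide x d s = slide x d t) :
    s = t := by
  rw [← dt_slide h s, hst, dt_slide h t]

/-- The vector with dot product one with both `a` and `c`, if these are independent. -/
def meet (a c : F × F) : F × F := ((c.2 - a.2) / dt a c, (a.1 - c.1) / dt a c)

lemma dot_meet_left {a c : F × F} (h : dt a c ≠ 0) : dot a (meet a c) = 1 := by
  simp only [dot, meet]
  field_simp
  simp only [dt]
  ring

lemma dot_meet_right {a c : F × F} (h : dt a c ≠ 0) : dot c (meet a c) = 1 := by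
  simp only [dot, meet]
  field_simp
  simp only [dt]
  ring

/-- Cramer's rule for the system `dot a b = 1`, `dot c b = 1`. -/
lemma dt_mul {a b c : F × F} (h : dot a b = 1) (h' : dot c b = 1) :
    dt a c * b.1 = c.2 - a.2 ∧ dt a c * b.2 = a.1 - c.1 := by
  simp only [dot, dt] at *
  constructor
  · linear_combination c.2 * h - a.2 * h'
  · linear_combination a.1 * h' - c.1 * h

/-- Distinct points on a common line missing the origin are linearly independent. -/
lemma dt_ne_zero {a b c : F × F} (h : dot a b = 1) (h' : dot c b = 1) (hac : a ≠ c) :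
    dt a c ≠ 0 := by
  intro h0
  obtain ⟨h1, h2⟩ := dt_mul h h'
  rw [h0, zero_mul] at h1 h2
  exact hac (Prod.ext (sub_eq_zero.1 h2.symm) (sub_eq_zero.1 h1.symm).symm)

lemma eq_meet {a b c : F × F} (h : dot a b = 1) (h' : dot c b = 1) (hac : a ≠ c) :
    b = meet a c := by
  have h0 := dt_ne_zero h h' hac
  obtain ⟨h1, h2⟩ := dt_mul h h'
  ext
  · simp only [meet]
    rw [← h1]
    field_simp
  · simp only [meet]
    rw [← h2]
    field_simp

lemma meet_unique {a b b' c : F × F} (h : dot a b = 1) (h1 : dot a b' = 1) (h2 : dot c b = 1)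
    (h3 : dot c b' = 1) (hac : a ≠ c) : b = b' :=
  (eq_meet h h2 hac).trans (eq_meet h1 h3 hac).symm

/-- The determinant deciding which triples of parameters give a hexagon through an edge. -/
lemma dt_param {u v : F × F} (h : dot u v = 1) (t r s : F) :
    dt (slide u v t) (slide u (slide v u r) s) = s * (1 + t * r) - t := by
  simp only [dt, slide, dot] at *
  linear_combination (s + s * t * r - t) * h

variable (F) in
/-- The vertices: a point (`false`) or a line (`true`), each given by a nonzero vector. The vector
`x` as a line stands for the line with equation `dot x y = 1`; these are exactly the lines of the
affine plane that avoid the origin. -/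
abbrev Vert : Type := Bool × {x : F × F // x ≠ 0}

variable (F) in
/-- The incidence graph of the biaffine plane of type 2 over `F`, obtained from the projective plane
by deleting the origin, the line at infinity and everything incident with one of them. -/
def biaff : SimpleGraph (Vert F) where
  Adj x y := y.1 = !x.1 ∧ dot x.2.1 y.2.1 = 1
  symm := ⟨fun x y h => ⟨by simp [h.1], by rw [dot_comm']; exact h.2⟩⟩
  loopless := ⟨fun x h => by simp at h⟩

lemma biaff_colorable : (biaff F).Colorable 2 := by
  refine (Coloring.colorable (α := Bool) (Coloring.mk (fun x => x.1) ?_))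
  intro x y h h'
  have := h.1
  rw [← h'] at this
  simp at this

lemma biaff_noC4 : NoC4 (biaff F) := by
  rintro ⟨i, x⟩ ⟨j, y⟩ ⟨k, a⟩ ⟨l, b⟩ h1 h2 h3 h4 h5
  have e1 : k = !i := h1.1
  have e2 : l = !i := h2.1
  have e3 : k = !j := h3.1
  have hxy : x.1 ≠ y.1 := by
    intro h
    exact h5 (Prod.ext (Bool.not_inj (e1.symm.trans e3)) (Subtype.ext h))
  exact Prod.ext (e1.trans e2.symm) (Subtype.ext (meet_unique h1.2 h2.2 h3.2 h4.2 hxy))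

/-- Every nonzero vector lies on a line missing the origin. -/
lemma exists_dot {x : F × F} (hx : x ≠ 0) : ∃ y, dot x y = 1 := by
  by_cases h : x.1 = 0
  · have h2 : x.2 ≠ 0 := fun h2 => hx (Prod.ext h h2)
    exact ⟨(0, x.2⁻¹), by simp [dot, h2]⟩
  · exact ⟨(x.1⁻¹, 0), by simp [dot, h]⟩

lemma biaff_degree (x : Vert F) : ((biaff F).neighborSet x).ncard = Nat.card F := by
  obtain ⟨y, hy⟩ := exists_dot x.2.2
  have hd : ∀ t, dot x.2.1 (slide y x.2.1 t) = 1 := fun t => (dot_slide t).trans hy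
  let f : F → (biaff F).neighborSet x := fun t =>
    ⟨(!x.1, ⟨slide y x.2.1 t, dot_ne_zero (hd t)⟩), rfl, hd t⟩
  rw [← Nat.card_coe_set_eq]
  refine (Nat.card_eq_of_bijective f ⟨?_, ?_⟩).symm
  · intro s t h
    have h' := congrArg (fun z => z.1.2.1) h
    exact slide_inj hy h'
  · rintro ⟨⟨i, z⟩, h1, h2⟩
    refine ⟨dt y z.1, Subtype.ext (Prod.ext h1.symm (Subtype.ext ?_))⟩
    exact slide_dt hy h2

/-- Parameters of the hexagons through an edge: three nonzero scalars `t, r, s`, subject to the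
independence condition of `dt_param`. -/
abbrev Par (F : Type) [Field F] : Type :=
  {p : F × F × F // p.1 ≠ 0 ∧ p.2.1 ≠ 0 ∧ p.2.2 ≠ 0 ∧ p.2.2 * (1 + p.1 * p.2.1) ≠ p.1}

lemma card_par [Finite F] (h3 : 3 ≤ Nat.card F) :
    Nat.card (Par F) = (Nat.card F - 1) * (Nat.card F ^ 2 - 3 * Nat.card F + 3) := by
  classical
  have := Fintype.ofFinite F
  let N : Finset F := Finset.univ.erase 0
  have memN : ∀ x, x ∈ N ↔ x ≠ 0 := by simp [N]
  have hN : N.card = Nat.card F - 1 := by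
    rw [Finset.card_erase_of_mem (Finset.mem_univ _), Finset.card_univ, Nat.card_eq_fintype_card]
  let T := N ×ˢ N ×ˢ N
  have hsplit := Finset.card_filter_add_card_filter_not (s := T)
    (fun p : F × F × F => p.2.2 * (1 + p.1 * p.2.1) ≠ p.1)
  have hgood : (T.filter fun p : F × F × F => p.2.2 * (1 + p.1 * p.2.1) ≠ p.1).card =
      Nat.card (Par F) := by
    rw [Nat.card_eq_fintype_card, Fintype.card_subtype]
    congr 1
    ext ⟨t, r, s⟩
    simp only [T, Finset.mem_filter, Finset.mem_product, memN, Finset.mem_univ, true_and]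
    tauto
  -- the equation `s * (1 + t * r) = t` says `r = s⁻¹ - t⁻¹`
  have hbad : (T.filter fun p : F × F × F => ¬ p.2.2 * (1 + p.1 * p.2.1) ≠ p.1).card =
      N.offDiag.card := by
    refine Finset.card_nbij' (fun p => (p.1, p.2.2)) (fun p => (p.1, p.2⁻¹ - p.1⁻¹, p.2)) ?_ ?_ ?_ ?_
    · rintro ⟨t, r, s⟩ h
      simp only [T, Finset.coe_filter, Set.mem_ofPred_eq, Finset.mem_product, memN, not_not,
        Finset.mem_coe, Finset.mem_offDiag] at h ⊢
      obtain ⟨⟨ht, hr, hs⟩, h⟩ := h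
      refine ⟨ht, hs, ?_⟩
      rintro rfl
      have : t * t * r = 0 := by linear_combination h
      simp_all
    · rintro ⟨t, s⟩ h
      simp only [T, Finset.coe_filter, Set.mem_ofPred_eq, Finset.mem_product, memN, not_not,
        Finset.mem_coe, Finset.mem_offDiag] at h ⊢
      obtain ⟨ht, hs, hts⟩ := h
      refine ⟨⟨ht, ?_, hs⟩, ?_⟩
      · exact sub_ne_zero.2 fun h => hts (inv_injective h).symm
      · field_simp
        ring
    · rintro ⟨t, r, s⟩ h
      simp only [T, Finset.coe_filter, Set.mem_ofPred_eq, Finset.mem_product, memN, not_not] at h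
      obtain ⟨⟨ht, hr, hs⟩, h⟩ := h
      simp only [Prod.mk.injEq, and_true, true_and]
      field_simp
      linear_combination -h
    · rintro ⟨t, s⟩ -
      rfl
  have hT : T.card = N.card * (N.card * N.card) := by
    simp only [T, Finset.card_product]
  rw [hgood, hbad, hT, Finset.offDiag_card, hN] at hsplit
  obtain ⟨k, hk⟩ : ∃ k, Nat.card F = k + 3 := ⟨Nat.card F - 3, by omega⟩
  rw [hk] at hsplit ⊢
  have e1 : k + 3 - 1 = k + 2 := rfl
  have e2 : (k + 2) * (k + 2) - (k + 2) = (k + 2) * (k + 1) := by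
    have : (k + 2) * (k + 2) = (k + 2) * (k + 1) + (k + 2) := by ring
    omega
  have e3 : (k + 3) ^ 2 - 3 * (k + 3) + 3 = k ^ 2 + 3 * k + 3 := by
    have : (k + 3) ^ 2 = k ^ 2 + 3 * k + 3 * (k + 3) := by ring
    omega
  rw [e1, e2] at hsplit
  rw [e1, e3]
  have : (k + 2) * ((k + 2) * (k + 2)) =
      (k + 2) * (k ^ 2 + 3 * k + 3) + (k + 2) * (k + 1) := by ring
  omega

lemma slide_zero (x d : F × F) : slide x d 0 = x := by simp [slide]

/-- For an edge `u v`, the hexagons `u v a b c d` are obtained by taking `a ≠ u` on `v`,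
`d ≠ v` through `u`, and `c ≠ u` on `d`, subject to `a` and `c` being linearly independent, so that
a line `b` missing the origin joins them. -/
lemma card_hex {u v : Vert F} (huv : (biaff F).Adj u v) :
    Nat.card (HexType (biaff F) u v) = Nat.card (Par F) := by
  obtain ⟨i, u, hu⟩ := u
  obtain ⟨j, v, hv⟩ := v
  obtain ⟨rfl, huv⟩ : j = !i ∧ dot u v = 1 := huv
  have hvu : dot v u = 1 := (dot_comm' v u).trans huv
  have ha : ∀ t, dot v (slide u v t) = 1 := fun t => (dot_slide t).trans hvu
  have hd : ∀ r, dot u (slide v u r) = 1 := fun r => (dot_slide r).trans huv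
  have hdu : ∀ r, dot (slide v u r) u = 1 := fun r => (dot_comm' _ _).trans (hd r)
  have hcc : ∀ r s, dot (slide v u r) (slide u (slide v u r) s) = 1 := fun r s =>
    (dot_slide s).trans (hdu r)
  have hdet : ∀ p : Par F,
      dt (slide u v p.1.1) (slide u (slide v u p.1.2.1) p.1.2.2) ≠ 0 := by
    intro p
    rw [dt_param huv]
    exact sub_ne_zero.2 p.2.2.2.2
  have hne : ∀ {x d : F × F} {t : F}, dot d x = 1 → t ≠ 0 → x ≠ slide x d t := by
    intro x d t h ht h'
    refine ht (slide_inj h ?_)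
    rw [← h', slide_zero]
  let f : Par F → HexType (biaff F) (i, ⟨u, hu⟩) (!i, ⟨v, hv⟩) := fun p =>
    ⟨((i, ⟨slide u v p.1.1, dot_ne_zero (ha _)⟩),
      (!i, ⟨meet (slide u v p.1.1) (slide u (slide v u p.1.2.1) p.1.2.2),
        dot_ne_zero (dot_meet_left (hdet p))⟩),
      (i, ⟨slide u (slide v u p.1.2.1) p.1.2.2, dot_ne_zero (hcc _ _)⟩),
      (!i, ⟨slide v u p.1.2.1, dot_ne_zero (hd _)⟩)), by
        obtain ⟨⟨t, r, s⟩, ht, hr, hs, h0⟩ := p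
        have hdp := hdet ⟨⟨t, r, s⟩, ht, hr, hs, h0⟩
        dsimp only at hdp ht hr hs ⊢
        have n1 := hne hvu ht
        have n2 := hne huv hr
        have n3 := hne (hdu r) hs
        refine ⟨⟨by simp, ha t⟩, ⟨by simp, dot_meet_left hdp⟩,
          ⟨by simp, (dot_comm' _ _).trans (dot_meet_right hdp)⟩,
          ⟨by simp, (dot_comm' _ _).trans (hcc r s)⟩, ⟨by simp, hdu r⟩,
          by simpa using n1, by simp, by simpa using n3, ?_, by simp, by simpa using n2, ?_,
          by simp, ?_⟩
        · intro h
          have h : v = meet _ _ := congrArg (fun z => z.2.1) h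
          have h1 := dot_meet_right hdp
          rw [← h] at h1
          exact n2 (meet_unique huv (hd r) h1 ((dot_comm' _ _).trans (hcc r s)) n3)
        · intro h
          have h : slide u v t = slide u (slide v u r) s := congrArg (fun z => z.2.1) h
          rw [← h] at hdp
          exact hdp (by simp only [dt]; ring)
        · intro h
          have h : meet _ _ = slide v u r := congrArg (fun z => z.2.1) h
          have h1 := dot_meet_left hdp
          rw [h] at h1
          exact n2 (meet_unique huv (hd r) ((dot_comm' _ _).trans (ha t)) h1 n1)⟩
  refine (Nat.card_eq_of_bijective f ⟨?_, ?_⟩).symm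
  · rintro ⟨⟨t, r, s⟩, hp⟩ ⟨⟨t', r', s'⟩, hp'⟩ h
    have h1 : slide u v t = slide u v t' := congrArg (fun z => z.1.1.2.1) h
    have h2 : slide v u r = slide v u r' := congrArg (fun z => z.1.2.2.2.2.1) h
    have h3 : slide u (slide v u r) s = slide u (slide v u r') s' :=
      congrArg (fun z => z.1.2.2.1.2.1) h
    obtain rfl := slide_inj hvu h1
    obtain rfl := slide_inj huv h2
    obtain rfl := slide_inj (hdu r) h3
    rfl
  · rintro ⟨⟨⟨i1, a, ha0⟩, ⟨i2, b, hb0⟩, ⟨i3, c, hc0⟩, ⟨i4, d, hd0⟩⟩, h⟩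
    have e1 : i1 = !!i := h.va.1
    have e2 : i2 = !i1 := h.ab.1
    have e3 : i3 = !i2 := h.bc.1
    have e4 : i4 = !i3 := h.cd.1
    have h1 : dot v a = 1 := h.va.2
    have h2 : dot a b = 1 := h.ab.2
    have h3 : dot b c = 1 := h.bc.2
    have h4 : dot c d = 1 := h.cd.2
    have h5 : dot d u = 1 := h.du.2
    have ua := h.ua
    have uc := h.uc
    have vd := h.vd
    have ac := h.ac
    subst e1 e2 e3 e4
    have h5' := (dot_comm' _ _).trans h5
    have h4' := (dot_comm' _ _).trans h4
    have h3' := (dot_comm' _ _).trans h3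
    have ea := slide_dt hvu h1
    have ed := slide_dt huv h5'
    have ec := slide_dt h5 h4'
    have nu : u ≠ a := by simpa using ua
    have nc : u ≠ c := by simpa using uc
    have nd : v ≠ d := by simpa using vd
    have nac : a ≠ c := by simpa using ac
    refine ⟨⟨(dt u a, dt v d, dt u c), ?_, ?_, ?_, ?_⟩, ?_⟩
    · exact dt_ne_zero huv ((dot_comm' _ _).trans h1) nu
    · exact dt_ne_zero hvu h5 nd
    · exact dt_ne_zero h5' h4 nc
    · have := dt_param huv (dt u a) (dt v d) (dt u c)
      dsimp only
      rw [ed, ea, ec] at this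
      rw [← sub_ne_zero, ← this]
      exact dt_ne_zero h2 h3' nac
    · apply Subtype.ext
      have eb := eq_meet h2 h3' nac
      simp [f, ed, ea, ec, eb]

lemma biaff_isEGR [Finite F] (h3 : 3 ≤ Nat.card F) :
    (biaff F).IsEGR (2 * Nat.card F ^ 2 - 2) (Nat.card F) 6
      ((Nat.card F - 1) * (Nat.card F ^ 2 - 3 * Nat.card F + 3)) := by
  have hcyc : ∀ u v : Vert F, (biaff F).Adj u v →
      Nat.card {p : (biaff F).Walk u u // p.IsCycle ∧ p.length = 6 ∧ s(u, v) ∈ p.edges} =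
        2 * ((Nat.card F - 1) * (Nat.card F ^ 2 - 3 * Nat.card F + 3)) := by
    intro u v huv
    rw [card_cycles huv, card_hex huv, card_par h3]
  refine ⟨inferInstance, ?_, biaff_degree, ?_, hcyc⟩
  · classical
    have := Fintype.ofFinite F
    rw [Nat.card_prod, Nat.card_eq_fintype_card (α := Bool), Fintype.card_bool,
      Nat.card_eq_fintype_card, Fintype.card_subtype_compl, Fintype.card_prod,
      Fintype.card_subtype_eq, Nat.card_eq_fintype_card, ← sq]
    omega
  · refine le_antisymm ?_ (by exact_mod_cast six_le_egirth biaff_colorable biaff_noC4)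
    let u : Vert F := (false, ⟨(1, 0), by simp⟩)
    let v : Vert F := (true, ⟨(1, 0), by simp⟩)
    have huv : (biaff F).Adj u v := ⟨rfl, by simp [u, v, dot]⟩
    have hpos : 0 < 2 * ((Nat.card F - 1) * (Nat.card F ^ 2 - 3 * Nat.card F + 3)) :=
      Nat.mul_pos (by norm_num) (Nat.mul_pos (by omega) (by omega))
    rw [← hcyc u v huv] at hpos
    obtain ⟨⟨p, hp, hl, -⟩⟩ := (Nat.card_pos_iff.1 hpos).1
    have := (le_egirth (n := (biaff F).egirth)).1 le_rfl u p hp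
    rwa [hl] at this

end Construction

/-- For every prime power `q ≥ 3`, the incidence graph of a biaffine plane of order `q`
of type 2 is an extremal bipartite `egr(2q²-2, q, 6, (q-1)(q²-3q+3))` graph: such a
bipartite edge-girth-regular graph exists, and every bipartite edge-girth-regular graph
with these parameters `(q, 6, (q-1)(q²-3q+3))` has at least `2q²-2` vertices. -/
theorem biaffine_type2_extremal (q : ℕ) (hq : IsPrimePow q) (hq3 : 3 ≤ q) :
    (∃ (V : Type) (G : SimpleGraph V), G.Colorable 2 ∧
      G.IsEGR (2 * q ^ 2 - 2) q 6 ((q - 1) * (q ^ 2 - 3 * q + 3))) ∧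
    ∀ (n : ℕ) (V : Type) (G : SimpleGraph V), G.Colorable 2 →
      G.IsEGR n q 6 ((q - 1) * (q ^ 2 - 3 * q + 3)) → 2 * q ^ 2 - 2 ≤ n := by
  refine ⟨?_, fun n V G hc h => lower_bound hq3 hc h⟩
  obtain ⟨p, k, hp, hk, rfl⟩ := (isPrimePow_nat_iff q).1 hq
  have : Fact p.Prime := ⟨hp⟩
  have hcard : Nat.card (GaloisField p k) = p ^ k := GaloisField.card p k hk.ne'
  refine ⟨Vert (GaloisField p k), biaff _, biaff_colorable, ?_⟩
  have h := biaff_isEGR (F := GaloisField p k) (by rw [hcard]; exact hq3)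
  rwa [hcard] at h
end

section
/- For every prime power q ≥ 3 there exists a bipartite egr(2q³, q, 8, (q−1)²((q−2)²+1)) graph, i.e., a bipartite q-regular simple graph on 2q³ vertices of girth 8 in which every edge lies on exactly (q−1)²((q−2)²+1) cycles of length 8. -/
/-!
Over the field `F` with `q` elements take points `(a, b, c)` and lines `[x, y, z]`, all in `F³`,
with incidence `b + y = a x`, `c + z = a² x`. This is the affine part of a generalized quadrangle
of order `(q, q)`: what remains of its incidence graph after removing the vertices at distance at
most two from a fixed edge. A point has one line for each value of `x`, and a line has one point
for each value of `a`, so the graph is `q`-regular on `2q³` vertices.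

Going around a closed walk through points with first coordinates `a₁, …, a_m` and lines with first
coordinates `x₁, …, x_m` (line `i` joining points `i` and `i + 1`), the incidence equations
telescope. With `d_i = x_{i-1} - x_i`, the walk closes up iff
`∑ d_i = ∑ a_i d_i = ∑ a_i² d_i = 0`. It does not backtrack iff all `d_i` are nonzero and
cyclically consecutive `a_i` differ.

* For `m = 2, 3` the Vandermonde determinant gives `d = 0`; hence there are no 4- or 6-cycles
  (`inc_unique`, `no_triangle`), and the girth is at least 8.
* For `m = 4` the solutions are of two kinds. Either all `a_i` are distinct, and then `d` is a
  nonzero multiple of one fixed vector; or `a₁ = a₃`, `a₂ = a₄`, `d₁ = -d₃`, `d₂ = -d₄`. With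
  `a₁` and `x₁` fixed this makes
  `(q-1)(q-2)(q-3)·(q-1) + (q-1)·(q-1)² = (q-1)²((q-2)² + 1)` solutions (`param`, `card_good`).

The cycles of length 8 based at `u` through the edge `uv`, each counted with its two orientations,
correspond two-to-one to the paths of length 7 from `v` to `u` (`card_cycle_edge`). By reversal
such a path may be taken from a line to a point, where it is described by the above solutions
(`card_path_eq_good`).
-/

open SimpleGraph

open Sum

/-! ### The incidence graph -/

namespace GQ

variable {F : Type} [Field F]

/-- Incidence of the point `P = (a, b, c)` with the line `l = [x, y, z]`:
`b + y = a x` and `c + z = a² x`. -/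
def Inc (P l : F × F × F) : Prop :=
  P.2.1 + l.2.1 = P.1 * l.1 ∧ P.2.2 + l.2.2 = P.1 ^ 2 * l.1

/-- The incidence graph of `Inc`; the summand `inl` holds the points, `inr` the lines. -/
def graph (F : Type) [Field F] : SimpleGraph ((F × F × F) ⊕ (F × F × F)) where
  Adj u v := match u, v with
    | inl P, inr l => Inc P l
    | inr l, inl P => Inc P l
    | _, _ => False
  symm := ⟨by rintro (P | P) (l | l) h <;> exact h⟩
  loopless := ⟨by rintro (P | P) h <;> exact h⟩

/-- The unique point with first coordinate `a` on the line `l`. -/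
def pt (l : F × F × F) (a : F) : F × F × F := (a, a * l.1 - l.2.1, a ^ 2 * l.1 - l.2.2)

/-- The unique line with first coordinate `x` through the point `P`. -/
def ln (P : F × F × F) (x : F) : F × F × F := (x, P.1 * x - P.2.1, P.1 ^ 2 * x - P.2.2)

lemma inc_pt (l : F × F × F) (a : F) : Inc (pt l a) l := by simp [Inc, pt]

lemma inc_ln (P : F × F × F) (x : F) : Inc P (ln P x) := by simp [Inc, ln]

lemma inc_iff_pt {P l : F × F × F} : Inc P l ↔ P = pt l P.1 := by
  obtain ⟨a, b, c⟩ := P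
  simp [Inc, pt, eq_sub_iff_add_eq]

lemma inc_iff_ln {P l : F × F × F} : Inc P l ↔ l = ln P l.1 := by
  obtain ⟨a, b, c⟩ := l
  simp [Inc, ln, eq_sub_iff_add_eq, add_comm]

lemma adj_inr {l : F × F × F} {w} (h : (graph F).Adj (inr l) w) : ∃ a, w = inl (pt l a) := by
  rcases w with P | m
  · exact ⟨P.1, congrArg inl (inc_iff_pt.1 h)⟩
  · exact h.elim

lemma adj_inl {P : F × F × F} {w} (h : (graph F).Adj (inl P) w) : ∃ x, w = inr (ln P x) := by
  rcases w with Q | l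
  · exact h.elim
  · exact ⟨l.1, congrArg inr (inc_iff_ln.1 h)⟩

lemma adj_pt (l : F × F × F) (a : F) : (graph F).Adj (inr l) (inl (pt l a)) := inc_pt l a

lemma adj_ln (P : F × F × F) (x : F) : (graph F).Adj (inl P) (inr (ln P x)) := inc_ln P x

lemma colorable : (graph F).Colorable 2 := by
  refine ⟨SimpleGraph.Coloring.mk (fun v => v.elim (fun _ => 0) (fun _ => 1)) ?_⟩
  rintro (P | P) (l | l) h
  · exact h.elim
  · simp
  · simp
  · exact h.elim

lemma ncard_neighborSet (v) : ((graph F).neighborSet v).ncard = Nat.card F := by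
  rcases v with P | l
  · have : (graph F).neighborSet (inl P) = Set.range (fun x => inr (ln P x)) := by
      ext w
      constructor
      · intro h
        obtain ⟨x, rfl⟩ := adj_inl h
        exact ⟨x, rfl⟩
      · rintro ⟨x, rfl⟩
        exact adj_ln P x
    rw [this, ← Set.image_univ, Set.ncard_image_of_injective, Set.ncard_univ]
    intro x y h
    exact congrArg Prod.fst (inr_injective h)
  · have : (graph F).neighborSet (inr l) = Set.range (fun a => inl (pt l a)) := by
      ext w
      constructor
      · intro h
        obtain ⟨x, rfl⟩ := adj_inr h
        exact ⟨x, rfl⟩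
      · rintro ⟨x, rfl⟩
        exact adj_pt l x
    rw [this, ← Set.image_univ, Set.ncard_image_of_injective, Set.ncard_univ]
    intro x y h
    exact congrArg Prod.fst (inl_injective h)

/-! ### No short cycles -/

/-- Two distinct points lie on at most one line. -/
lemma inc_unique {P Q l m : F × F × F} (h1 : Inc P l) (h2 : Inc Q l) (h3 : Inc P m)
    (h4 : Inc Q m) : P = Q ∨ l = m := by
  by_cases hx : l.1 = m.1
  · right
    rw [inc_iff_ln.1 h1, inc_iff_ln.1 h3, hx]
  · left
    have : (P.1 - Q.1) * (l.1 - m.1) = 0 := by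
      linear_combination h2.1 - h1.1 + h3.1 - h4.1
    have hPQ : P.1 = Q.1 := by
      rcases mul_eq_zero.1 this with h | h
      · exact sub_eq_zero.1 h
      · exact absurd (sub_eq_zero.1 h) hx
    rw [inc_iff_pt.1 h1, inc_iff_pt.1 h2, hPQ]

/-- There are no triangles: three distinct points are not pairwise joined by lines `l, m, n` with
`l ≠ m`. -/
lemma no_triangle {P Q R l m n : F × F × F} (h1 : Inc P l) (h2 : Inc Q l) (h3 : Inc Q m)
    (h4 : Inc R m) (h5 : Inc R n) (h6 : Inc P n) (hPQ : P ≠ Q) (hQR : Q ≠ R) (hPR : P ≠ R)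
    (hlm : l ≠ m) : False := by
  have a1 : P.1 ≠ Q.1 := fun h => hPQ (by rw [inc_iff_pt.1 h1, inc_iff_pt.1 h2, h])
  have a2 : Q.1 ≠ R.1 := fun h => hQR (by rw [inc_iff_pt.1 h3, inc_iff_pt.1 h4, h])
  have a3 : P.1 ≠ R.1 := fun h => hPR (by rw [inc_iff_pt.1 h6, inc_iff_pt.1 h5, h])
  have x1 : l.1 ≠ m.1 := fun h => hlm (by rw [inc_iff_ln.1 h2, inc_iff_ln.1 h3, h])
  have key : (P.1 - Q.1) * (Q.1 - R.1) * (l.1 - m.1) = 0 := by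
    linear_combination (h1.2 - h2.2 + h3.2 - h4.2 + h5.2 - h6.2) * (-1)
      + (P.1 + R.1) * (h1.1 - h2.1 + h3.1 - h4.1 + h5.1 - h6.1)
  simp [sub_eq_zero, a1, a2, x1] at key

/-- Together with the edge joining its ends, such a path would be a cycle of length 4 or 6. -/
lemma no_short_path {l P : F × F × F} (hP : Inc P l) (p : (graph F).Walk (inr l) (inl P))
    (hp : p.IsPath) (h1 : p.length = 3 ∨ p.length = 5) : False := by
  obtain _ | ⟨e1, p⟩ := p
  obtain ⟨a2, rfl⟩ := adj_inr e1
  obtain _ | ⟨e2, p⟩ := p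
  · simp at h1
  obtain ⟨x2, rfl⟩ := adj_inl e2
  obtain _ | ⟨e3, p⟩ := p
  obtain ⟨a3, rfl⟩ := adj_inr e3
  obtain _ | ⟨e4, p⟩ := p
  · simp [SimpleGraph.Walk.isPath_def] at hp
    rcases inc_unique hP e1 e3 e2 with h | h
    · exact hp.2 h.symm
    · exact hp.1 h
  obtain ⟨x3, rfl⟩ := adj_inl e4
  obtain _ | ⟨e5, p⟩ := p
  obtain ⟨a4, rfl⟩ := adj_inr e5
  obtain _ | ⟨e6, p⟩ := p
  · simp [SimpleGraph.Walk.isPath_def] at hp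
    exact no_triangle hP e1 e2 e3 e4 e5 (Ne.symm hp.2.1.2) hp.2.1.1 (Ne.symm hp.2.2.2) hp.1.1
  · simp at h1

/-! ### Paths of length 7 from a line to a point on it -/

/-- The condition on the first coordinates `(a₂, x₂, a₃, x₃, a₄, x₄)` of the inner vertices for a
sequence starting at a line with first coordinate `x₁` and ending at a point on that line with
first coordinate `a₁` to be a path: consecutive coordinates differ, and the incidence equations,
telescoped around the cycle, hold. -/
def Good (a1 x1 : F) (t : F × F × F × F × F × F) : Prop :=
  match t with
  | (a2, x2, a3, x3, a4, x4) =>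
    (a1 ≠ a2 ∧ a2 ≠ a3 ∧ a3 ≠ a4 ∧ a4 ≠ a1) ∧ (x1 ≠ x2 ∧ x2 ≠ x3 ∧ x3 ≠ x4 ∧ x4 ≠ x1) ∧
    (a2 - a1) * x1 + (a3 - a2) * x2 + (a4 - a3) * x3 + (a1 - a4) * x4 = 0 ∧
    (a2 ^ 2 - a1 ^ 2) * x1 + (a3 ^ 2 - a2 ^ 2) * x2 + (a4 ^ 2 - a3 ^ 2) * x3
      + (a1 ^ 2 - a4 ^ 2) * x4 = 0

/-- The sixth inner vertex of the walk that starts at the line `l` and whose successive inner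
vertices have the first coordinates listed in `t`. -/
def lastLine (l : F × F × F) (t : F × F × F × F × F × F) : F × F × F :=
  match t with
  | (a2, x2, a3, x3, a4, x4) => ln (pt (ln (pt (ln (pt l a2) x2) a3) x3) a4) x4

/-- The walk of length 7 from the line `l` to the point `P` whose inner vertices have the first
coordinates listed in `t`; the last step is possible by `h`. -/
def toWalk (l P : F × F × F) (t : F × F × F × F × F × F) (h : Inc P (lastLine l t)) :
    (graph F).Walk (inr l) (inl P) :=
  .cons (adj_pt l t.1) <| .cons (adj_ln _ t.2.1) <| .cons (adj_pt _ t.2.2.1) <|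
  .cons (adj_ln _ t.2.2.2.1) <| .cons (adj_pt _ t.2.2.2.2.1) <| .cons (adj_ln _ t.2.2.2.2.2) <|
  .cons (show (graph F).Adj (inr (lastLine l t)) (inl P) from h) .nil

lemma support_toWalk (l P : F × F × F) (a2 x2 a3 x3 a4 x4 : F) (h) :
    (toWalk l P (a2, x2, a3, x3, a4, x4) h).support =
      [inr l, inl (pt l a2), inr (ln (pt l a2) x2), inl (pt (ln (pt l a2) x2) a3),
        inr (ln (pt (ln (pt l a2) x2) a3) x3), inl (pt (ln (pt (ln (pt l a2) x2) a3) x3) a4),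
        inr (ln (pt (ln (pt (ln (pt l a2) x2) a3) x3) a4) x4), inl P] := rfl

lemma toWalk_inj {l P : F × F × F} {t t'} (h h') (e : toWalk l P t h = toWalk l P t' h') :
    t = t' := by
  have := congrArg SimpleGraph.Walk.support e
  obtain ⟨a2, x2, a3, x3, a4, x4⟩ := t
  obtain ⟨b2, y2, b3, y3, b4, y4⟩ := t'
  simp only [support_toWalk, List.cons.injEq, inl.injEq, inr.injEq] at this
  obtain ⟨-, h2, h3, h4, h5, h6, h7, -⟩ := this
  have h2 := congrArg Prod.fst h2
  have h3 := congrArg Prod.fst h3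
  have h4 := congrArg Prod.fst h4
  have h5 := congrArg Prod.fst h5
  have h6 := congrArg Prod.fst h6
  have h7 := congrArg Prod.fst h7
  simp only [pt, ln] at h2 h3 h4 h5 h6 h7
  simp [*]

lemma exists_toWalk {l P : F × F × F} (p : (graph F).Walk (inr l) (inl P)) (hp : p.length = 7) :
    ∃ t h, p = toWalk l P t h := by
  obtain _ | ⟨e1, p⟩ := p
  obtain ⟨a2, rfl⟩ := adj_inr e1
  obtain _ | ⟨e2, p⟩ := p
  · simp at hp
  obtain ⟨x2, rfl⟩ := adj_inl e2
  obtain _ | ⟨e3, p⟩ := p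
  obtain ⟨a3, rfl⟩ := adj_inr e3
  obtain _ | ⟨e4, p⟩ := p
  · simp at hp
  obtain ⟨x3, rfl⟩ := adj_inl e4
  obtain _ | ⟨e5, p⟩ := p
  obtain ⟨a4, rfl⟩ := adj_inr e5
  obtain _ | ⟨e6, p⟩ := p
  · simp at hp
  obtain ⟨x4, rfl⟩ := adj_inl e6
  obtain _ | ⟨e7, p⟩ := p
  obtain ⟨a1, h⟩ := adj_inr e7
  subst h
  obtain _ | ⟨e8, p⟩ := p
  · exact ⟨(a2, x2, a3, x3, a4, x4), e7, rfl⟩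
  · simp at hp

/-- For a closed-up sequence, distinctness of all vertices reduces to distinctness of neighbouring
points and of neighbouring lines, since two lines share at most one point. -/
lemma isPath_toWalk_iff {l : F × F × F} {a1 : F} {t h} :
    (toWalk l (pt l a1) t h).IsPath ↔ Good a1 l.1 t := by
  obtain ⟨a2, x2, a3, x3, a4, x4⟩ := t
  have E1 := h.1
  have E2 := h.2
  simp only [lastLine, pt, ln] at E1 E2
  rw [SimpleGraph.Walk.isPath_def, support_toWalk]
  constructor
  · intro hn
    simp only [List.nodup_cons, List.mem_cons, not_or, inl.injEq, inr.injEq, reduceCtorEq,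
      not_false_eq_true, List.not_mem_nil, true_and, and_true] at hn
    obtain ⟨⟨n1, n2, n3⟩, ⟨m1, m2, m3⟩, ⟨n4, n5⟩, ⟨m4, m5⟩, n6, m6, -⟩ := hn
    refine ⟨⟨?_, ?_, ?_, ?_⟩, ⟨?_, ?_, ?_, ?_⟩, ?_, ?_⟩
    · rintro rfl; exact m3 rfl
    · rintro rfl; apply m1; simp [pt, ln]
    · rintro rfl; apply m4; simp [pt, ln]
    · intro e; apply m6; subst e
      exact (inc_iff_pt.1 (inc_ln _ x4)).trans (inc_iff_pt.1 h).symm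
    · rintro rfl; apply n1; simp [pt, ln]
    · rintro rfl; apply n4; simp [pt, ln]
    · rintro rfl; apply n6; simp [pt, ln]
    · intro e; apply n3
      subst e
      exact (inc_iff_ln.1 (inc_pt _ a1)).trans (inc_iff_ln.1 h).symm
    · linear_combination -E1
    · linear_combination -E2
  · rintro ⟨⟨A1, A2, A3, A4⟩, ⟨X1, X2, X3, X4⟩, -, -⟩
    have A1' := A1.symm
    have u13 : ∀ {P Q l m : F × F × F}, Inc P l → Inc Q l → Inc P m → Inc Q m →
      P.1 ≠ Q.1 → l.1 ≠ m.1 → False := by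
      intro P Q l m h1 h2 h3 h4 h5 h6
      rcases inc_unique h1 h2 h3 h4 with h | h
      · exact h5 (by rw [h])
      · exact h6 (by rw [h])
    simp only [List.nodup_cons, List.mem_cons, not_or, inl.injEq, inr.injEq, reduceCtorEq,
      not_false_eq_true, List.not_mem_nil, true_and, and_true, List.nodup_nil]
    set p2 := pt l a2 with hp2
    set l2 := ln p2 x2 with hl2
    set p3 := pt l2 a3 with hp3
    set l3 := ln p3 x3 with hl3
    set p4 := pt l3 a4 with hp4
    have i2 : Inc p2 l := inc_pt _ _
    have i3 : Inc p2 l2 := inc_ln _ _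
    have i4 : Inc p3 l2 := inc_pt _ _
    have i5 : Inc p3 l3 := inc_ln _ _
    have i6 : Inc p4 l3 := inc_pt _ _
    have i7 : Inc p4 (ln p4 x4) := inc_ln _ _
    have i8 : Inc (pt l a1) (ln p4 x4) := h
    refine ⟨⟨?_, ?_, ?_⟩, ⟨?_, ?_, ?_⟩, ⟨?_, ?_⟩, ⟨?_, ?_⟩, ?_, ?_⟩
    · intro e; exact X1 (congrArg Prod.fst e)
    · intro e
      exact u13 i3 i4 (e ▸ i2) (e ▸ i5) A2 (Ne.symm X1)
    · intro e; exact X4 (congrArg Prod.fst e).symm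
    · intro e; exact A2 (congrArg Prod.fst e)
    · intro e
      exact u13 i4 (e ▸ i3) i5 (i6) A3 X2
    · intro e; exact A1' (congrArg Prod.fst e)
    · intro e; exact X2 (congrArg Prod.fst e)
    · intro e
      exact u13 i5 i6 i4 (by rw [e]; exact i7) A3 (Ne.symm X2)
    · intro e; exact A3 (congrArg Prod.fst e)
    · intro e
      exact u13 i6 i5 i7 (by rw [e]; exact i8) (Ne.symm A3) X3
    · intro e; exact X3 (congrArg Prod.fst e)
    · intro e; exact A4 (congrArg Prod.fst e)

lemma card_path_eq_good (l : F × F × F) (a1 : F) :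
    Nat.card {p : (graph F).Walk (inr l) (inl (pt l a1)) // p.IsPath ∧ p.length = 7} =
      Nat.card {t // Good a1 l.1 t} := by
  symm
  have hinc : ∀ t, Good a1 l.1 t → Inc (pt l a1) (lastLine l t) := by
    rintro ⟨a2, x2, a3, x3, a4, x4⟩ ⟨-, -, h1, h2⟩
    constructor
    · simp only [lastLine, pt, ln]; linear_combination -h1
    · simp only [lastLine, pt, ln]; linear_combination -h2
  refine Nat.card_eq_of_bijective
    (fun t => ⟨toWalk l (pt l a1) t.1 (hinc _ t.2), isPath_toWalk_iff.2 t.2, rfl⟩) ⟨?_, ?_⟩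
  · intro t t' h
    exact Subtype.ext (toWalk_inj (hinc _ t.2) (hinc _ t'.2) (congrArg Subtype.val h))
  · rintro ⟨p, hp, hl⟩
    obtain ⟨t, h, rfl⟩ := exists_toWalk p hl
    exact ⟨⟨t, isPath_toWalk_iff.1 hp⟩, rfl⟩

/-! ### Counting the solutions -/

/-- Ordered pairs of distinct elements of `F \ {0, 1}`. -/
def Pairs (F : Type) [Field F] : Type :=
  {w : F × F // w.1 ≠ 0 ∧ w.1 ≠ 1 ∧ w.2 ≠ 0 ∧ w.2 ≠ 1 ∧ w.1 ≠ w.2}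

lemma card_pairs [Finite F] :
    Nat.card (Pairs F) = (Nat.card F - 2) * (Nat.card F - 2) - (Nat.card F - 2) := by
  classical
  have := Fintype.ofFinite F
  have hc : ((Finset.univ.erase (0 : F)).erase 1).card = Nat.card F - 2 := by
    rw [Finset.card_erase_of_mem (by simp), Finset.card_erase_of_mem (by simp),
      Finset.card_univ, Nat.card_eq_fintype_card]
    omega
  rw [← hc, ← Finset.offDiag_card, ← Nat.card_eq_finsetCard]
  apply Nat.card_congr
  apply Equiv.subtypeEquivRight
  rintro ⟨a, b⟩
  simp only [Finset.mem_offDiag, Finset.mem_erase, Finset.mem_univ]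
  tauto

/-- The parametrization of the solutions of `Good a1 x1`. The parameter `s` is `a₂ - a₁`.

In the first case the points have first coordinates `a₁ + s·0, a₁ + s·1, a₁ + s·α, a₁ + s·β`, all
distinct, and the differences `x_{i-1} - x_i` are `t` times the vector spanning the kernel of the
`3 × 4` Vandermonde matrix on the nodes `0, 1, α, β`, cleared of denominators. In the second case
`a₃ = a₁` and `a₄ = a₂`, and `e = x₂ - x₁`, `t = x₄ - x₁ = x₃ - x₂` are arbitrary nonzero. -/
def param (a1 x1 : F) : Fˣ × Fˣ × (Pairs F ⊕ Fˣ) → F × F × F × F × F × F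
  | (s, t, inl ⟨(α, β), _⟩) =>
    (a1 + s, x1 - t * (α * β * (α - β)),
     a1 + s * α, x1 - t * (α * β * (α - β)) + t * (β * (1 - β)),
     a1 + s * β, x1 - t * ((1 - α) * (1 - β) * (α - β)))
  | (s, t, inr e) => (a1 + s, x1 + e, a1, x1 + e + t, a1 + s, x1 + t)

lemma param_good (a1 x1 : F) (y) : Good a1 x1 (param a1 x1 y) := by
  obtain ⟨s, t, ⟨⟨α, β⟩, h1, h2, h3, h4, h5⟩ | e⟩ := y
  · have hs := s.ne_zero
    have ht := t.ne_zero
    have k1 : (α : F) - β ≠ 0 := sub_ne_zero.2 h5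
    have k2 : 1 - α ≠ 0 := sub_ne_zero.2 (Ne.symm h2)
    have k3 : 1 - β ≠ 0 := sub_ne_zero.2 (Ne.symm h4)
    refine ⟨⟨?_, ?_, ?_, ?_⟩, ⟨?_, ?_, ?_, ?_⟩, ?_, ?_⟩
    · intro h
      exact hs (by linear_combination -h)
    · intro h
      exact mul_ne_zero hs k2 (by linear_combination h)
    · intro h
      exact mul_ne_zero hs k1 (by linear_combination h)
    · intro h
      exact mul_ne_zero hs h3 (by linear_combination h)
    · intro h
      exact mul_ne_zero ht (mul_ne_zero (mul_ne_zero h1 h3) k1) (by linear_combination h)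
    · intro h
      exact mul_ne_zero ht (mul_ne_zero h3 k3) (by linear_combination -h)
    · intro h
      exact mul_ne_zero ht (mul_ne_zero h1 k2) (by linear_combination h)
    · intro h
      exact mul_ne_zero ht (mul_ne_zero (mul_ne_zero k2 k3) k1) (by linear_combination -h)
    · ring
    · ring
  · have hs := s.ne_zero
    have ht := t.ne_zero
    have he := e.ne_zero
    simp only [Good, param]
    refine ⟨⟨?_, ?_, ?_, ?_⟩, ⟨?_, ?_, ?_, ?_⟩, ?_, ?_⟩ <;>
      first | ring1 | simp

lemma param_inj (a1 x1 : F) : Function.Injective (param a1 x1) := by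
  rintro ⟨s, t, ⟨⟨α, β⟩, h1, h2, h3, h4, h5⟩ | e⟩
    ⟨s', t', ⟨⟨α', β'⟩, h1', h2', h3', h4', h5'⟩ | e'⟩ h
  · simp only [param, Prod.mk.injEq, add_right_inj, Units.val_inj] at h
    obtain ⟨rfl, -, e1, -, e2, e3⟩ := h
    obtain rfl := mul_left_cancel₀ s.ne_zero e1
    obtain rfl := mul_left_cancel₀ s.ne_zero e2
    have k : (1 - α) * (1 - β) * (α - β) ≠ 0 :=
      mul_ne_zero (mul_ne_zero (sub_ne_zero.2 (Ne.symm h2)) (sub_ne_zero.2 (Ne.symm h4)))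
        (sub_ne_zero.2 h5)
    obtain rfl := Units.ext (mul_right_cancel₀ k (sub_right_injective e3))
    rfl
  · simp only [param, Prod.mk.injEq] at h
    have : (s : F) * α = 0 := by linear_combination h.2.2.1
    exact absurd this (mul_ne_zero s.ne_zero h1)
  · simp only [param, Prod.mk.injEq] at h
    have : (s' : F) * α' = 0 := by linear_combination -h.2.2.1
    exact absurd this (mul_ne_zero s'.ne_zero h1')
  · simp only [param, Prod.mk.injEq, add_right_inj, Units.val_inj] at h
    obtain ⟨rfl, rfl, -, -, -, rfl⟩ := h
    rfl

lemma param_surj (a1 x1 : F) (y) (hy : Good a1 x1 y) : ∃ p, param a1 x1 p = y := by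
  obtain ⟨a2, x2, a3, x3, a4, x4⟩ := y
  obtain ⟨⟨A1, A2, A3, A4⟩, ⟨X1, X2, X3, X4⟩, E1, E2⟩ := hy
  obtain ⟨s, rfl⟩ : ∃ s, a2 = a1 + s := ⟨a2 - a1, by ring⟩
  have hs : s ≠ 0 := by rintro rfl; simp at A1
  obtain ⟨α, rfl⟩ : ∃ α, a3 = a1 + s * α := ⟨(a3 - a1) / s, by field_simp; ring⟩
  obtain ⟨β, rfl⟩ : ∃ β, a4 = a1 + s * β := ⟨(a4 - a1) / s, by field_simp; ring⟩
  have h2 : α ≠ 1 := by rintro rfl; simp at A2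
  have h3 : β ≠ 0 := by rintro rfl; simp at A4
  have h5 : α ≠ β := by rintro rfl; simp at A3
  -- the two moment equations in the coordinates with nodes `0, 1, α, β`
  have M1 : (x1 - x2) + α * (x2 - x3) + β * (x3 - x4) = 0 := by
    apply mul_left_cancel₀ hs
    linear_combination E1
  have M2 : (x1 - x2) + α ^ 2 * (x2 - x3) + β ^ 2 * (x3 - x4) = 0 := by
    apply mul_left_cancel₀ (pow_ne_zero 2 hs)
    linear_combination E2 - 2 * a1 * E1
  have M3 : α * (1 - α) * (x2 - x3) + β * (1 - β) * (x3 - x4) = 0 := by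
    linear_combination M1 - M2
  by_cases h1 : α = 0
  · subst h1
    have h4 : β = 1 := by
      have : β * (1 - β) * (x3 - x4) = 0 := by linear_combination M3
      have := (mul_eq_zero.1 this).resolve_right (sub_ne_zero.2 X3)
      exact (sub_eq_zero.1 ((mul_eq_zero.1 this).resolve_left h3)).symm
    subst h4
    refine ⟨(Units.mk0 s hs, Units.mk0 (x4 - x1) (sub_ne_zero.2 X4),
      inr (Units.mk0 (x2 - x1) (sub_ne_zero.2 X1.symm))), ?_⟩
    simp only [param, Units.val_mk0, Prod.mk.injEq]
    refine ⟨trivial, by ring, by ring, by linear_combination -M1, by ring, by ring⟩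
  · have h4 : β ≠ 1 := by
      rintro rfl
      have : α * (1 - α) * (x2 - x3) = 0 := by linear_combination M3
      simp [h1, sub_eq_zero, X2, h2.symm] at this
    have k1 : α - β ≠ 0 := sub_ne_zero.2 h5
    have k2 : 1 - α ≠ 0 := sub_ne_zero.2 (Ne.symm h2)
    have k3 : 1 - β ≠ 0 := sub_ne_zero.2 (Ne.symm h4)
    -- the common ratio, read off at the node `α`
    have ht : (x3 - x2) / (β * (1 - β)) ≠ 0 :=
      div_ne_zero (sub_ne_zero.2 X2.symm) (mul_ne_zero h3 k3)
    obtain ⟨t, htd⟩ : ∃ t, t = (x3 - x2) / (β * (1 - β)) := ⟨_, rfl⟩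
    rw [← htd] at ht
    have D3 : x3 - x2 = t * (β * (1 - β)) := by rw [htd]; field_simp
    have D4 : x3 - x4 = t * (α * (1 - α)) := by
      apply mul_left_cancel₀ (mul_ne_zero h3 k3)
      linear_combination M3 + α * (1 - α) * D3
    have D2 : x1 - x2 = t * (α * β * (α - β)) := by
      linear_combination M1 + α * D3 - β * D4
    refine ⟨(Units.mk0 s hs, Units.mk0 t ht, inl ⟨(α, β), h1, h2, h3, h4, h5⟩), ?_⟩
    simp only [param, Units.val_mk0, Prod.mk.injEq]
    refine ⟨trivial, by linear_combination D2, trivial, by linear_combination D2 - D3, trivial,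
      by linear_combination D2 - D3 + D4⟩

lemma card_good [Finite F] (a1 x1 : F) :
    Nat.card {t // Good a1 x1 t} =
      (Nat.card F - 1) * ((Nat.card F - 1) *
        ((Nat.card F - 2) * (Nat.card F - 2) - (Nat.card F - 2) + (Nat.card F - 1))) := by
  have hu : Nat.card Fˣ = Nat.card F - 1 := Nat.card_units F
  have : Finite (Pairs F) := by unfold Pairs; infer_instance
  rw [← card_pairs, ← hu, ← Nat.card_sum, ← Nat.card_prod, ← Nat.card_prod]
  symm
  refine Nat.card_eq_of_bijective (fun y => ⟨param a1 x1 y, param_good a1 x1 y⟩) ⟨?_, ?_⟩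
  · intro y y' h
    exact param_inj a1 x1 (congrArg Subtype.val h)
  · rintro ⟨y, hy⟩
    obtain ⟨p, rfl⟩ := param_surj a1 x1 y hy
    exact ⟨p, rfl⟩

lemma card_path_inr [Finite F] (h3 : 3 ≤ Nat.card F) {l P : F × F × F} (h : Inc P l) :
    Nat.card {p : (graph F).Walk (inr l) (inl P) // p.IsPath ∧ p.length = 7} =
      (Nat.card F - 1) ^ 2 * ((Nat.card F - 2) ^ 2 + 1) := by
  rw [inc_iff_pt.1 h, card_path_eq_good, card_good]
  obtain ⟨n, hn⟩ := Nat.exists_eq_add_of_le h3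
  rw [hn, show 3 + n - 1 = n + 2 by omega, show 3 + n - 2 = n + 1 by omega]
  have : (n + 1) * (n + 1) - (n + 1) + (n + 2) = (n + 1) ^ 2 + 1 := by
    have : n + 1 ≤ (n + 1) * (n + 1) := Nat.le_mul_self _
    rw [pow_two]
    omega
  rw [this]
  ring

end GQ

/-! ### Cycles through an edge and paths between its ends -/

section Generic

variable {V : Type*} {G : SimpleGraph V}

lemma card_path_symm (u v : V) (n : ℕ) :
    Nat.card {p : G.Walk u v // p.IsPath ∧ p.length = n} =
      Nat.card {p : G.Walk v u // p.IsPath ∧ p.length = n} :=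
  Nat.card_eq_of_bijective (fun p => ⟨p.1.reverse, p.2.1.reverse, by simp [p.2.2]⟩)
    ⟨fun p p' h => Subtype.ext (SimpleGraph.Walk.reverse_injective (congrArg Subtype.val h)),
      fun p => ⟨⟨p.1.reverse, p.2.1.reverse, by simp [p.2.2]⟩, by simp⟩⟩

lemma edge_not_mem_of_isPath {u v : V} (p : G.Walk v u) (hp : p.IsPath) (hl : 2 ≤ p.length) :
    s(u, v) ∉ p.edges := by
  intro h
  rw [Sym2.eq_swap] at h
  have := hp.length_eq_one_of_mem_edges h
  omega

lemma exists_cons_of_snd {u v : V} (h : G.Adj u v) (c : G.Walk u u) (hc : c.IsCycle)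
    (hv : c.snd = v) : ∃ p : G.Walk v u, p.IsPath ∧ c = .cons h p := by
  obtain _ | ⟨e, p⟩ := c
  · simp at hc
  · simp only [SimpleGraph.Walk.snd_cons] at hv
    subst hv
    exact ⟨p, ((SimpleGraph.Walk.cons_isCycle_iff _ _).1 hc).1, rfl⟩

lemma snd_or_penultimate {u v : V} (c : G.Walk u u) (hc : c.IsCycle) (hv : s(u, v) ∈ c.edges) :
    c.snd = v ∨ c.penultimate = v := by
  obtain _ | ⟨e, p⟩ := c
  · simp at hc
  · have hp := ((SimpleGraph.Walk.cons_isCycle_iff _ _).1 hc)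
    rw [SimpleGraph.Walk.edges_cons, List.mem_cons] at hv
    rcases hv with hv | hv
    · left
      simpa using (Sym2.congr_right.1 hv).symm
    · right
      have := hp.1.eq_penultimate_of_mem_edges hv
      rw [SimpleGraph.Walk.penultimate_cons_of_not_nil]
      · exact this.symm
      · intro hn
        rw [SimpleGraph.Walk.edges_eq_nil.2 hn] at hv
        simp at hv

/-- A cycle based at `u` through the edge `uv` traverses that edge either in its first or in its
last step; removing the edge leaves a path from `v` to `u` or the reverse of one. -/
lemma card_cycle_edge {u v : V} (h : G.Adj u v) (n : ℕ) (hn : 2 ≤ n) :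
    Nat.card {p : G.Walk u u // p.IsCycle ∧ p.length = n + 1 ∧ s(u, v) ∈ p.edges} =
      2 * Nat.card {p : G.Walk v u // p.IsPath ∧ p.length = n} := by
  have hcyc (p : G.Walk v u) (hp : p.IsPath ∧ p.length = n) :
      (SimpleGraph.Walk.cons h p).IsCycle :=
    (SimpleGraph.Walk.cons_isCycle_iff _ _).2
      ⟨hp.1, edge_not_mem_of_isPath p hp.1 (hp.2 ▸ hn)⟩
  have h2 : 2 = Nat.card Bool := by simp
  rw [h2, ← Nat.card_prod]
  symm
  refine Nat.card_eq_of_bijective (fun y => match y with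
    | (true, p) => ⟨.cons h p.1, hcyc p.1 p.2, by simp [p.2.2], by simp⟩
    | (false, p) => ⟨(SimpleGraph.Walk.cons h p.1).reverse, (hcyc p.1 p.2).reverse,
        by simp [p.2.2], by simp⟩) ⟨?_, ?_⟩
  · have mixed (p p' : G.Walk v u) (hp : p.IsPath ∧ p.length = n)
        (e : SimpleGraph.Walk.cons h p = (SimpleGraph.Walk.cons h p').reverse) : False := by
      apply (hcyc p hp).snd_ne_penultimate
      rw [SimpleGraph.Walk.snd_cons, e, SimpleGraph.Walk.penultimate_reverse,
        SimpleGraph.Walk.snd_cons]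
    rintro ⟨_ | _, p, hp⟩ ⟨_ | _, p', hp'⟩ e
    · have := SimpleGraph.Walk.reverse_injective (congrArg Subtype.val e)
      simp only [SimpleGraph.Walk.cons.injEq, heq_eq_eq, true_and] at this
      subst this
      rfl
    · exact (mixed p' p hp' (congrArg Subtype.val e).symm).elim
    · exact (mixed p p' hp (congrArg Subtype.val e)).elim
    · have := congrArg Subtype.val e
      simp only [SimpleGraph.Walk.cons.injEq, heq_eq_eq, true_and] at this
      subst this
      rfl
  · rintro ⟨c, hc, hl, hv⟩
    rcases snd_or_penultimate c hc hv with hv | hv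
    · obtain ⟨p, hp, rfl⟩ := exists_cons_of_snd h c hc hv
      exact ⟨(true, ⟨p, hp, by simpa using hl⟩), rfl⟩
    · obtain ⟨p, hp, e⟩ := exists_cons_of_snd h c.reverse hc.reverse (by simpa using hv)
      refine ⟨(false, ⟨p, hp, ?_⟩), Subtype.ext ?_⟩
      · have := congrArg SimpleGraph.Walk.length e
        simp only [SimpleGraph.Walk.length_reverse, SimpleGraph.Walk.length_cons] at this
        omega
      · simp only [← e, SimpleGraph.Walk.reverse_reverse]

end Generic

/-! ### The incidence graph is edge-girth-regular -/

namespace GQ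

variable {F : Type} [Field F]

lemma eight_le_length {u} (c : (graph F).Walk u u) (hc : c.IsCycle) : 8 ≤ c.length := by
  by_contra! hlt
  have h3 := hc.three_le_length
  have heven : Even c.length :=
    SimpleGraph.two_colorable_iff_forall_loop_even.1 colorable _ c
  obtain _ | ⟨e, p⟩ := c
  · simp at hc
  have hp := ((SimpleGraph.Walk.cons_isCycle_iff _ _).1 hc).1
  have hl : p.length = 3 ∨ p.length = 5 := by
    rw [SimpleGraph.Walk.length_cons] at heven h3 hlt
    obtain ⟨k, hk⟩ := heven
    omega
  rcases u with P | l
  · obtain ⟨x, rfl⟩ := adj_inl e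
    exact no_short_path e p hp hl
  · obtain ⟨a, rfl⟩ := adj_inr e
    exact no_short_path e p.reverse hp.reverse (by simpa using hl)

lemma card_path [Finite F] (h3 : 3 ≤ Nat.card F) {u v} (h : (graph F).Adj u v) :
    Nat.card {p : (graph F).Walk v u // p.IsPath ∧ p.length = 7} =
      (Nat.card F - 1) ^ 2 * ((Nat.card F - 2) ^ 2 + 1) := by
  rcases u with P | l
  · obtain ⟨x, rfl⟩ := adj_inl h
    exact card_path_inr h3 h
  · obtain ⟨a, rfl⟩ := adj_inr h
    rw [card_path_symm]
    exact card_path_inr h3 h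

lemma isEGR [Finite F] (h3 : 3 ≤ Nat.card F) :
    (graph F).IsEGR (2 * Nat.card F ^ 3) (Nat.card F) 8
      ((Nat.card F - 1) ^ 2 * ((Nat.card F - 2) ^ 2 + 1)) := by
  have hcount : ∀ u v, (graph F).Adj u v →
      Nat.card {p : (graph F).Walk u u // p.IsCycle ∧ p.length = 8 ∧ s(u, v) ∈ p.edges} =
        2 * ((Nat.card F - 1) ^ 2 * ((Nat.card F - 2) ^ 2 + 1)) := by
    intro u v h
    rw [card_cycle_edge h 7 (by norm_num), card_path h3 h]
  refine ⟨inferInstance, ?_, ncard_neighborSet, le_antisymm ?_ ?_, hcount⟩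
  · rw [Nat.card_sum, Nat.card_prod, Nat.card_prod]
    ring
  · have h := hcount _ _ (adj_pt (0 : F × F × F) 0)
    have hpos : 0 < 2 * ((Nat.card F - 1) ^ 2 * ((Nat.card F - 2) ^ 2 + 1)) := by
      have : 0 < Nat.card F - 1 := by omega
      positivity
    rw [← h] at hpos
    obtain ⟨⟨c, hc, hl, -⟩⟩ := (Nat.card_pos_iff.1 hpos).1
    have := SimpleGraph.egirth_le_length hc
    rwa [hl] at this
  · rw [SimpleGraph.le_egirth]
    intro u c hc
    exact_mod_cast eight_le_length c hc

end GQ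

/-- For every prime power `q ≥ 3` there exists a bipartite
`egr(2q³, q, 8, (q-1)²((q-2)²+1))` graph, arising from a generalized quadrangle
of order `(q, q)`. -/
theorem gq_bipartite_egr (q : ℕ) (hq : IsPrimePow q) (hq3 : 3 ≤ q) :
    ∃ (V : Type) (G : SimpleGraph V), G.Colorable 2 ∧
      G.IsEGR (2 * q ^ 3) q 8 ((q - 1) ^ 2 * ((q - 2) ^ 2 + 1)) := by
  obtain ⟨p, n, hp, hn, rfl⟩ := (isPrimePow_nat_iff q).1 hq
  have : Fact p.Prime := ⟨hp⟩
  have hc : Nat.card (GaloisField p n) = p ^ n := GaloisField.card p n hn.ne'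
  have : Finite (GaloisField p n) := Nat.finite_of_card_ne_zero (by omega)
  refine ⟨_, GQ.graph (GaloisField p n), GQ.colorable, ?_⟩
  have := GQ.isEGR (F := GaloisField p n) (by omega)
  rwa [hc] at this
end

section
/- For every prime power q ≥ 2 there exists a bipartite egr(2(q³+q²+q+1), q²+q+1, 4, q³+q²) graph, i.e., a bipartite (q²+q+1)-regular simple graph on 2(q³+q²+q+1) vertices of girth 4 in which every edge lies on exactly q³+q² cycles of length 4. -/
/-!
The graph is the incidence graph of points and planes of `PG(3, q)`. Identifying a plane with the
point whose coordinates are its coefficients, incidence becomes orthogonality of projective points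
for the standard dot product, a symmetric relation.

By rank-nullity, `m` independent points have `1 + q + ⋯ + q ^ (3 - m)` common orthogonal points
(`ncard_orthogonal`). With `m = 0, 1, 2` this gives the number of points, the valency
`q² + q + 1`, and the number `q + 1` of common neighbours of two distinct points.

A `4`-cycle through an edge `uv` is closed up by a path `v b c u` with `b ≠ u`, `c ≠ v`, and each
of these paths gives two closed walks based at `u`, one for each orientation
(`card_four_cycles`). In the incidence graph there are `q² + q` choices for `b`, and for each of
them `c` is one of the `q + 1` common neighbours of `b` and `u`, other than `v`; hence
`(q² + q) q = q³ + q²` cycles. Girth `4` follows, since a `2`-coloured graph has no triangle.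
-/

open SimpleGraph

/-! ### Counting `4`-cycles through an edge -/

/-- The ways `(b, c)` to complete the edge `uv` to a `4`-cycle `u v b c`. -/
def fourCyclePairs {V : Type*} (G : SimpleGraph V) (u v : V) : Set (V × V) :=
  {bc | G.Adj v bc.1 ∧ G.Adj bc.1 bc.2 ∧ G.Adj bc.2 u ∧ bc.1 ≠ u ∧ bc.2 ≠ v}

/-- Every completing pair yields exactly two based closed walks: `u v b c u` and its reverse. -/
lemma card_four_cycles {V : Type*} (G : SimpleGraph V) (u v : V) (huv : G.Adj u v) :
    Nat.card {p : G.Walk u u // p.IsCycle ∧ p.length = 4 ∧ s(u, v) ∈ p.edges} =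
      2 * (fourCyclePairs G u v).ncard := by
  let w : fourCyclePairs G u v → G.Walk u u := fun bc =>
    .cons huv (.cons bc.2.1 (.cons bc.2.2.1 (.cons bc.2.2.2.1 .nil)))
  have hw : ∀ bc, (w bc).IsCycle := by
    rintro ⟨⟨b, c⟩, h1, h2, h3, h4, h5⟩
    have e1 := huv.ne
    have e2 := h1.ne
    have e3 := h2.ne
    have e4 := h3.ne
    simp only at e1 e2 e3 e4 h4 h5
    rw [Walk.isCycle_def, Walk.isTrail_def]
    simp only [w, Walk.edges_cons, Walk.edges_nil, Walk.support_cons, Walk.support_nil,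
      List.tail_cons, ne_eq, reduceCtorEq, not_false_eq_true, true_and]
    constructor
    · simp; grind
    · simp; grind
  let f : Bool × fourCyclePairs G u v →
      {p : G.Walk u u // p.IsCycle ∧ p.length = 4 ∧ s(u, v) ∈ p.edges} := fun x =>
    if x.1 then ⟨w x.2, hw x.2, by simp [w], by simp [w]⟩
    else ⟨(w x.2).reverse, (hw x.2).reverse, by simp [w], by
      rw [Walk.edges_reverse]; simp [w]⟩
  have hf : Function.Bijective f := by
    constructor
    · rintro ⟨i, ⟨⟨b, c⟩, h1, h2, h3, h4, h5⟩⟩ ⟨j, ⟨⟨b', c'⟩, h1', h2', h3', h4', h5'⟩⟩ h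
      have h := congrArg (fun p => p.1.support) h
      cases i <;> cases j <;> simp [f, w] at h <;> simp at h4 h5 h4' h5' ⊢ <;> grind
    · rintro ⟨p, hp, hl, he⟩
      match p, hp, hl, he with
      | .cons (v := a) k1 (.cons (v := b) k2 (.cons (v := c) k3 (.cons k4 .nil))), hp, hl, he =>
        have hn := hp.support_nodup
        have e4 := k4.ne
        have e1 := k1.ne
        simp at hn he
        have hva : v = a ∨ v = c := by grind
        rcases hva with rfl | rfl
        · exact ⟨(true, ⟨(b, c), k2, k3, k4, by grind, by grind⟩), rfl⟩
        · refine ⟨(false, ⟨(b, a), k3.symm, k2.symm, k1.symm, by grind, by grind⟩), ?_⟩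
          apply Subtype.ext
          apply Walk.ext_support
          simp [f, w]
  rw [← Nat.card_eq_of_bijective f hf, Nat.card_prod]
  rw [Nat.card_coe_set_eq]; simp

/-! ### Orthogonal points in `PG(3, q)` -/

open Projectivization in
/-- Points orthogonal to `m` independent points form a projective subspace of
projective dimension `3 - m`. -/
lemma ncard_orthogonal {K : Type*} [Field K] [Finite K] [DecidableEq K] {m : ℕ}
    (x : Fin m → Projectivization K (Fin 4 → K)) (hx : Independent x) :
    {y | ∀ i, (x i).orthogonal y}.ncard = ∑ i ∈ Finset.range (4 - m), Nat.card K ^ i := by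
  rw [independent_iff] at hx
  let M : Matrix (Fin m) (Fin 4) K := fun i => (x i).rep
  let W := LinearMap.ker M.mulVecLin
  have hrank : M.rank = m := by
    have h : LinearIndependent K M.row := hx
    simpa using h.rank_matrix
  have hW : Module.finrank K W = 4 - m := by
    have h := M.mulVecLin.finrank_range_add_finrank_ker
    have h' : Module.finrank K (LinearMap.range M.mulVecLin) = m := hrank
    rw [h', Module.finrank_fin_fun] at h
    change m + Module.finrank K W = 4 at h
    omega
  rw [← card_of_finrank K W hW,
    ← Nat.card_range_of_injective (map_injective W.subtype W.injective_subtype)]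
  rw [← Nat.card_coe_set_eq]
  congr 2
  ext y
  have horth : ∀ (v : Fin 4 → K) (hv : v ≠ 0),
      (∀ i, (x i).orthogonal (mk K v hv)) ↔ v ∈ W := by
    intro v hv
    rw [LinearMap.mem_ker, funext_iff]
    refine forall_congr' fun i => ?_
    conv_lhs => rw [← (x i).mk_rep]
    exact orthogonal_mk _ _
  constructor
  · intro hy
    induction y with | h v hv =>
    have hvW := (horth v hv).1 hy
    exact ⟨mk K ⟨v, hvW⟩ (by simpa [Subtype.ext_iff] using hv), rfl⟩
  · rintro ⟨z, rfl⟩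
    induction z with | h v hv =>
    rw [map_mk]
    exact (horth _ _).2 v.2

lemma card_points (K : Type*) [Field K] [Finite K] :
    Nat.card (Projectivization K (Fin 4 → K)) =
      Nat.card K ^ 3 + Nat.card K ^ 2 + Nat.card K + 1 := by
  rw [Projectivization.card_of_finrank K (Fin 4 → K) (n := 4) (by simp)]
  simp [Finset.sum_range_succ]
  ring

section

variable {K : Type*} [Field K] [Finite K] [DecidableEq K]

lemma ncard_orthogonal_one (x : Projectivization K (Fin 4 → K)) :
    {y | x.orthogonal y}.ncard = Nat.card K ^ 2 + Nat.card K + 1 := by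
  have h := ncard_orthogonal ![x] (by
    rw [Projectivization.independent_iff]
    exact LinearIndependent.of_subsingleton 0 x.rep_nonzero)
  simp [Finset.sum_range_succ] at h
  rw [h]; ring

lemma ncard_orthogonal_two {x y : Projectivization K (Fin 4 → K)} (hxy : x ≠ y) :
    {z | x.orthogonal z ∧ y.orthogonal z}.ncard = Nat.card K + 1 := by
  have h := ncard_orthogonal ![x, y] ((Projectivization.independent_pair_iff_ne x y).2 hxy)
  simp [Finset.sum_range_succ, Fin.forall_fin_two] at h
  rw [h]; ring

end

/-! ### The incidence graph -/

/-- The point-plane incidence graph of `PG(3, K)`. The Boolean distinguishes points from planes,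
and a plane is represented by the projective point of its coefficients. -/
def incidenceGraph (K : Type*) [Field K] [DecidableEq K] :
    SimpleGraph (Bool × Projectivization K (Fin 4 → K)) where
  Adj u v := u.1 ≠ v.1 ∧ u.2.orthogonal v.2
  symm := ⟨fun _ _ h => ⟨h.1.symm, Projectivization.orthogonal_comm.1 h.2⟩⟩
  loopless := ⟨fun _ h => h.1 rfl⟩

section

variable {K : Type*} [Field K] [Finite K] [DecidableEq K]

lemma ncard_neighborSet_incidenceGraph (u : Bool × Projectivization K (Fin 4 → K)) :
    ((incidenceGraph K).neighborSet u).ncard = Nat.card K ^ 2 + Nat.card K + 1 := by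
  rw [← ncard_orthogonal_one u.2,
    ← Set.ncard_image_of_injective {y | u.2.orthogonal y} (Prod.mk_right_injective (!u.1))]
  apply congrArg Set.ncard
  ext ⟨i, y⟩
  simp [incidenceGraph]
  grind

lemma ncard_fourCyclePairs (u v : Bool × Projectivization K (Fin 4 → K))
    (huv : (incidenceGraph K).Adj u v) :
    (fourCyclePairs (incidenceGraph K) u v).ncard = Nat.card K ^ 3 + Nat.card K ^ 2 := by
  obtain ⟨i, x⟩ := u
  obtain ⟨j, y⟩ := v
  obtain ⟨hij, hxy⟩ := huv
  simp only at hij hxy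
  let B : Set (Projectivization K (Fin 4 → K)) := {b | y.orthogonal b} \ {x}
  let C (b : Projectivization K (Fin 4 → K)) : Set (Projectivization K (Fin 4 → K)) :=
    {c | x.orthogonal c ∧ b.orthogonal c} \ {y}
  have hB : Nat.card B = Nat.card K ^ 2 + Nat.card K := by
    rw [Nat.card_coe_set_eq, Set.ncard_sdiff_singleton_of_mem
      (show x ∈ {b | y.orthogonal b} from Projectivization.orthogonal_comm.1 hxy),
      ncard_orthogonal_one]
    rfl
  have hC : ∀ b : B, Nat.card (C b) = Nat.card K := by
    rintro ⟨b, hyb, hbx⟩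
    rw [Nat.card_coe_set_eq, Set.ncard_sdiff_singleton_of_mem
      (show y ∈ {c | x.orthogonal c ∧ b.orthogonal c} from
        ⟨hxy, Projectivization.orthogonal_comm.1 hyb⟩),
      ncard_orthogonal_two (Ne.symm hbx)]
    rfl
  let e : (Σ b : B, C b) ≃ fourCyclePairs (incidenceGraph K) (i, x) (j, y) :=
    { toFun := fun z => ⟨((i, z.1.1), (j, z.2.1)),
        ⟨hij.symm, z.1.2.1⟩, ⟨hij, z.2.2.1.2⟩,
        ⟨hij.symm, Projectivization.orthogonal_comm.1 z.2.2.1.1⟩,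
        fun h => z.1.2.2 (congrArg Prod.snd h), fun h => z.2.2.2 (congrArg Prod.snd h)⟩
      invFun := fun z => ⟨⟨z.1.1.2, z.2.1.2, fun h => z.2.2.2.2.1 (Prod.ext (by
          have h1 := z.2.1.1
          simp only at h1
          revert h1 hij
          cases i <;> cases j <;> simp) h)⟩,
        ⟨z.1.2.2, ⟨Projectivization.orthogonal_comm.1 z.2.2.2.1.2, z.2.2.1.2⟩,
          fun h => z.2.2.2.2.2 (Prod.ext (by
          have h1 := z.2.2.2.1.1
          simp only at h1
          revert h1 hij
          cases i <;> cases j <;> simp) h)⟩⟩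
      left_inv := fun z => rfl
      right_inv := by
        rintro ⟨⟨⟨i', b⟩, ⟨j', c⟩⟩, h1, h2, h3, h4, h5⟩
        have k1 := h1.1
        have k3 := h3.1
        simp only at k1 k3
        have e1 : i' = i := by revert hij k1; cases i <;> cases j <;> cases i' <;> simp
        have e2 : j' = j := by revert hij k3; cases i <;> cases j <;> cases j' <;> simp
        subst e1 e2
        rfl }
  have : Fintype B := Fintype.ofFinite _
  rw [← Nat.card_coe_set_eq, ← Nat.card_congr e, Nat.card_sigma]
  simp only [hC, Finset.sum_const, Finset.card_univ, smul_eq_mul, ← Nat.card_eq_fintype_card, hB]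
  ring

lemma incidenceGraph_isEGR (K : Type*) [Field K] [Finite K] [DecidableEq K] :
    (incidenceGraph K).IsEGR (2 * (Nat.card K ^ 3 + Nat.card K ^ 2 + Nat.card K + 1))
      (Nat.card K ^ 2 + Nat.card K + 1) 4 (Nat.card K ^ 3 + Nat.card K ^ 2) := by
  have hcyc : ∀ u v, (incidenceGraph K).Adj u v →
      Nat.card {p : (incidenceGraph K).Walk u u // p.IsCycle ∧ p.length = 4 ∧ s(u, v) ∈ p.edges} =
        2 * (Nat.card K ^ 3 + Nat.card K ^ 2) := fun u v huv => by
    rw [card_four_cycles _ _ _ huv, ncard_fourCyclePairs u v huv]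
  refine ⟨inferInstance, ?_, ncard_neighborSet_incidenceGraph, ?_, hcyc⟩
  · rw [Nat.card_prod, card_points]; simp
  · apply le_antisymm
    · -- An edge exists by the positive valency, and lies on a positive number of `4`-cycles.
      let u : Bool × Projectivization K (Fin 4 → K) :=
        (true, .mk K (fun _ => 1) (fun h => one_ne_zero (congrFun h 0)))
      obtain ⟨v, hv⟩ : ((incidenceGraph K).neighborSet u).Nonempty := by
        apply Set.nonempty_of_ncard_ne_zero
        rw [ncard_neighborSet_incidenceGraph]
        omega
      have hpos : 0 < Nat.card K := Nat.card_pos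
      have hne : Nat.card {p : (incidenceGraph K).Walk u u //
          p.IsCycle ∧ p.length = 4 ∧ s(u, v) ∈ p.edges} ≠ 0 := by
        rw [hcyc u v hv]; positivity
      obtain ⟨⟨p, hp, hl, -⟩⟩ := (Nat.card_ne_zero.1 hne).1
      have := egirth_le_length hp
      rwa [hl] at this
    · rw [le_egirth]
      intro u p hp
      have h3 := hp.three_le_length
      have h4 : p.length ≠ 3 := by
        intro hl
        match p, hl with
        | .cons k1 (.cons k2 (.cons k3 .nil)), _ =>
          have h1 := k1.1
          have h2 := k2.1
          have h3 := k3.1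
          exact h3 (by rw [Bool.eq_not_of_ne h1, Bool.eq_not_of_ne h2, Bool.not_not])
      exact_mod_cast (show 4 ≤ p.length by omega)

end

/-- For every prime power `q ≥ 2` there exists a bipartite
`egr(2(q³+q²+q+1), q²+q+1, 4, q³+q²)` graph, arising from a pencil of elliptic
quadrics in `PG(3,q)`. -/
theorem pencil_bipartite_egr (q : ℕ) (hq : IsPrimePow q) (hq2 : 2 ≤ q) :
    ∃ (V : Type) (G : SimpleGraph V), G.Colorable 2 ∧
      G.IsEGR (2 * (q ^ 3 + q ^ 2 + q + 1)) (q ^ 2 + q + 1) 4 (q ^ 3 + q ^ 2) := by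
  classical
  obtain ⟨p, n, hp, hn, rfl⟩ := (isPrimePow_nat_iff q).1 hq
  have : Fact p.Prime := ⟨hp⟩
  refine ⟨_, incidenceGraph (GaloisField p n), ?_, ?_⟩
  · exact (Coloring.mk (G := incidenceGraph (GaloisField p n)) Prod.fst
      (fun h => h.1)).colorable
  · have h := incidenceGraph_isEGR (GaloisField p n)
    rwa [GaloisField.card p n hn.ne'] at h
end

section
/- Let k ≥ 3 and let G be an egr(n,k,4,λ) graph. Then n·(λ+k−1) ≥ k³−2k²+2k−1+λ. -/
/-!
Fix a vertex `u` and let `c v` be the number of common neighbours of `u` and `v`. Counting paths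
`u, x, v` with `v ≠ u` gives `∑_{v ≠ u} c v = k (k - 1)`. The sum `∑_{v ≠ u} (c v)²` counts triples
`(x, v, y)` with `v ≠ u` and `x, y` common neighbours of `u` and `v`: for a fixed neighbour `x` of
`u` there are `k - 1` of them with `y = x`, and those with `y ≠ x` are the 4-cycles `u, x, v, y` through the
edge `ux`, so at most `λ` (`card_fourCycles_le`). The Cauchy–Schwarz inequality over the `n - 1`
vertices `v ≠ u` then yields `(k (k - 1))² ≤ (n - 1) k (k - 1 + λ)`, and cancelling `k` gives
the bound.
-/

open SimpleGraph

/-- The 4-cycles through the edge `ux`, encoded by their other two vertices `(b, c)` in the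
order `u, x, b, c`, number at most `λ`. Each of them is traversed by exactly two closed walks
based at `u`, which matches the factor `2` in `IsEGR`. -/
lemma card_fourCycles_le {V : Type*} [Fintype V] [DecidableEq V] (G : SimpleGraph V)
    [DecidableRel G.Adj] (lam : ℕ) (u x : V) (hux : G.Adj u x)
    (h : Nat.card {p : G.Walk u u // p.IsCycle ∧ p.length = 4 ∧ s(u, x) ∈ p.edges} = 2 * lam) :
    (Finset.univ.filter fun q : V × V =>
      G.Adj x q.1 ∧ q.1 ≠ u ∧ G.Adj q.1 q.2 ∧ G.Adj q.2 u ∧ q.2 ≠ x).card ≤ lam := by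
  set T := Finset.univ.filter fun q : V × V =>
      G.Adj x q.1 ∧ q.1 ≠ u ∧ G.Adj q.1 q.2 ∧ G.Adj q.2 u ∧ q.2 ≠ x with hT
  have hmem : ∀ q : T, G.Adj x q.1.1 ∧ q.1.1 ≠ u ∧ G.Adj q.1.1 q.1.2 ∧ G.Adj q.1.2 u ∧
      q.1.2 ≠ x := fun q => (Finset.mem_filter.mp q.2).2
  have hcyc : ∀ (a b c : V) (h1 : G.Adj u a) (h2 : G.Adj a b) (h3 : G.Adj b c) (h4 : G.Adj c u),
      b ≠ u → c ≠ a →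
      (Walk.cons h1 (Walk.cons h2 (Walk.cons h3 (Walk.cons h4 Walk.nil)))).IsCycle := by
    intro a b c h1 h2 h3 h4 hbu hca
    have := h1.ne
    have := h2.ne
    have := h3.ne
    have := h4.ne
    rw [Walk.cons_isCycle_iff]
    simp [Walk.isPath_def]
    grind
  -- the two orientations of the cycle `u, x, b, c`, as walks based at `u`
  let f : T × Bool → {p : G.Walk u u // p.IsCycle ∧ p.length = 4 ∧ s(u, x) ∈ p.edges} :=
    fun q => if q.2 then
      ⟨Walk.cons hux (Walk.cons (hmem q.1).1 (Walk.cons (hmem q.1).2.2.1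
        (Walk.cons (hmem q.1).2.2.2.1 Walk.nil))),
        hcyc _ _ _ _ _ _ _ (hmem q.1).2.1 (hmem q.1).2.2.2.2, by simp, by simp⟩
      else
      ⟨Walk.cons (hmem q.1).2.2.2.1.symm (Walk.cons (hmem q.1).2.2.1.symm
        (Walk.cons (hmem q.1).1.symm (Walk.cons hux.symm Walk.nil))),
        hcyc _ _ _ _ _ _ _ (hmem q.1).2.1 (hmem q.1).2.2.2.2.symm, by simp, by simp⟩
  have hf : Function.Injective f := by
    rintro ⟨q, i⟩ ⟨q', i'⟩ hq
    have hs := congrArg (fun p => p.1.support) hq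
    have h1 := (hmem q).2.2.2.2
    have h2 := (hmem q').2.2.2.2
    cases i <;> cases i' <;> simp [f] at hs <;> ext <;> grind
  have hfin : Finite {p : G.Walk u u // p.IsCycle ∧ p.length = 4 ∧ s(u, x) ∈ p.edges} := by
    have h4 : Set.Finite {p : G.Walk u u | p.length = 4} := Set.toFinite _
    exact (h4.subset (fun p hp => hp.2.1) :
      Set.Finite {p : G.Walk u u | p.IsCycle ∧ p.length = 4 ∧ s(u, x) ∈ p.edges})
  have hle := Nat.card_le_card_of_injective f hf
  rw [h, Nat.card_prod] at hle
  simp at hle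
  omega

/-- Eigenvalue lower bound for edge-girth-regular graphs of girth 4:
if `G` is an `egr(n, k, 4, λ)` graph with `k ≥ 3`, then
`n(λ + k - 1) ≥ k³ - 2k² + 2k - 1 + λ`. -/
theorem egr_girth4_lower_bound (n k lam : ℕ) (hk : 3 ≤ k) {V : Type*}
    (G : SimpleGraph V) (h : G.IsEGR n k 4 lam) :
    (n : ℤ) * (lam + k - 1) ≥ (k : ℤ) ^ 3 - 2 * k ^ 2 + 2 * k - 1 + lam := by
  classical
  obtain ⟨hfin, hn, hreg, hgirth, hcount⟩ := h
  have := Fintype.ofFinite V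
  -- the girth is finite, so the graph has a cycle and hence a vertex
  have hne : Nonempty V := by
    by_contra hemp
    rw [not_nonempty_iff] at hemp
    have : G.egirth = ⊤ := egirth_eq_top.mpr fun v => hemp.elim v
    rw [this] at hgirth
    exact absurd hgirth (by decide)
  obtain ⟨u⟩ := hne
  have hdeg : ∀ v, (G.neighborFinset v).card = k := fun v => by
    rw [← hreg v, ← Set.ncard_coe_finset, coe_neighborFinset]
  have hcard : ((Finset.univ.erase u : Finset V).card : ℤ) = n - 1 := by
    rw [Finset.cast_card_erase_of_mem (Finset.mem_univ u), ← hn, Nat.card_eq_fintype_card]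
    simp
  let c : V → ℤ := fun v => ∑ x ∈ G.neighborFinset u, if G.Adj x v then 1 else 0
  have hsum : ∑ v ∈ Finset.univ.erase u, c v = k * (k - 1) := by
    have hx : ∀ x ∈ G.neighborFinset u,
        ∑ v ∈ Finset.univ.erase u, (if G.Adj x v then (1 : ℤ) else 0) = k - 1 := by
      intro x hx
      rw [mem_neighborFinset] at hx
      have he : (Finset.univ.erase u).filter (fun v => G.Adj x v)
          = (G.neighborFinset x).erase u := by
        ext v; simp
      rw [Finset.sum_boole, he, Finset.cast_card_erase_of_mem (by simpa using hx.symm), hdeg]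
    simp only [c]
    rw [Finset.sum_comm, Finset.sum_congr rfl hx, Finset.sum_const, hdeg, nsmul_eq_mul]
  have hsq : ∑ v ∈ Finset.univ.erase u, c v ^ 2 ≤ k * (k - 1 + lam) := by
    have hx : ∀ x ∈ G.neighborFinset u,
        ∑ v ∈ Finset.univ.erase u, ∑ y ∈ G.neighborFinset u,
          ((if G.Adj x v then (1 : ℤ) else 0) * if G.Adj y v then 1 else 0) ≤ k - 1 + lam := by
      intro x hx
      rw [mem_neighborFinset] at hx
      have hT := card_fourCycles_le G lam u x hx (hcount u x hx)
      set T := Finset.univ.filter fun q : V × V =>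
        G.Adj x q.1 ∧ q.1 ≠ u ∧ G.Adj q.1 q.2 ∧ G.Adj q.2 u ∧ q.2 ≠ x
      rw [← Finset.sum_product']
      simp only [← ite_and, mul_ite, mul_one, mul_zero]
      rw [Finset.sum_boole]
      -- the pairs `(v, y)` with `y = x` form the first set, those with `y ≠ x` the second
      have hsub : ((Finset.univ.erase u) ×ˢ G.neighborFinset u).filter
          (fun q : V × V => G.Adj q.2 q.1 ∧ G.Adj x q.1)
          ⊆ ((G.neighborFinset x).erase u).image (fun v => (v, x)) ∪ T := by
        rintro ⟨v, y⟩ hq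
        simp [T] at hq ⊢
        have := G.adj_comm y v
        have := G.adj_comm y u
        grind
      have h1 := (Finset.card_le_card hsub).trans (Finset.card_union_le _ _)
      have h2 := Finset.card_image_le (s := (G.neighborFinset x).erase u) (f := fun v => (v, x))
      rw [Finset.card_erase_of_mem (by simpa using hx.symm), hdeg] at h2
      omega
    have hexp : ∑ v ∈ Finset.univ.erase u, c v ^ 2 = ∑ x ∈ G.neighborFinset u,
        ∑ v ∈ Finset.univ.erase u, ∑ y ∈ G.neighborFinset u,
          ((if G.Adj x v then (1 : ℤ) else 0) * if G.Adj y v then 1 else 0) := by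
      rw [Finset.sum_comm]
      refine Finset.sum_congr rfl fun v _ => ?_
      rw [sq, Finset.sum_mul_sum]
    rw [hexp]
    refine (Finset.sum_le_sum hx).trans ?_
    rw [Finset.sum_const, hdeg, nsmul_eq_mul]
  have hcs := sq_sum_le_card_mul_sum_sq (s := Finset.univ.erase u) (f := c)
  rw [hsum, hcard] at hcs
  have hn1 : (0 : ℤ) ≤ n - 1 := hcard ▸ Int.natCast_nonneg _
  have hmain := hcs.trans (mul_le_mul_of_nonneg_left hsq hn1)
  have hkpos : (0 : ℤ) < k := by omega
  have hdiv : (k : ℤ) * (k - 1) ^ 2 ≤ (n - 1) * (k - 1 + lam) := by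
    refine le_of_mul_le_mul_left ?_ hkpos
    linarith
  linarith
end

section
/- Let k ≥ 3 and let G be a bipartite egr(n,k,4,λ) graph. Then n·(λ+k−1) ≥ 2(k³−2k²+2k−1+λ). -/
/-!
Fix a vertex `v` and let `c w` be the number of common neighbours of `v` and `w`. Let `P` consist of
the vertices other than `v` in the colour class of `v`. Counting paths `v a w` gives
`∑_{w ∈ P} c w = k (k - 1)`. Counting triples `(a, w, b)` with `a`, `b` common neighbours of `v` and
`w` gives `∑_{w ∈ P} (c w)² ≤ k (k - 1) + k λ`, where the degenerate triples `a = b` contribute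
`k (k - 1)` and the others are 4-cycles, of which there are `λ` through each edge `va`.
Cauchy-Schwarz then yields `k (k - 1)² ≤ |P| (k - 1 + λ)` (`colourClass_bound`).

Adding this inequality for the two ends of an edge, whose colour classes partition the
vertex set, gives the theorem. This second-moment estimate is equivalent to the one obtained from
the eigenvalues of `B Bᵀ`, where `B` is the biadjacency matrix.
-/

open SimpleGraph

section Aux

variable {V : Type*} [Fintype V] [DecidableEq V] (G : SimpleGraph V) [DecidableRel G.Adj]

/-- For an edge `va`, the pairs `(w, b)` for which `v a w b` is a 4-cycle. -/
def fourCycleCompletions (v a : V) : Finset (Σ _ : V, V) :=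
  ((G.neighborFinset a).erase v).sigma
    fun w => (G.neighborFinset v ∩ G.neighborFinset w).erase a

/-- Each 4-cycle `v a w b` yields two closed walks at `v` through the edge `va`, one for each
orientation, so the completions are at most half as many as these walks. -/
lemma two_mul_card_fourCycleCompletions_le {v a : V} (hva : G.Adj v a) :
    2 * (fourCycleCompletions G v a).card ≤
      Nat.card {p : G.Walk v v // p.IsCycle ∧ p.length = 4 ∧ s(v, a) ∈ p.edges} := by
  have hfin : Finite {p : G.Walk v v // p.IsCycle ∧ p.length = 4 ∧ s(v, a) ∈ p.edges} := by
    have h4 : Finite {p : G.Walk v v // p.length = 4} :=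
      inferInstanceAs (Finite ({p : G.Walk v v | p.length = 4} : Set _))
    exact Finite.of_injective
      (fun p => (⟨p.1, p.2.2.1⟩ : {p : G.Walk v v // p.length = 4}))
      (fun p q hpq => Subtype.ext (by simpa using hpq))
  have key : ∀ x ∈ fourCycleCompletions G v a,
      x.1 ≠ v ∧ x.2 ≠ a ∧ G.Adj a x.1 ∧ G.Adj x.1 x.2 ∧ G.Adj v x.2 := by
    rintro ⟨w, b⟩ hx
    simp only [fourCycleCompletions, Finset.mem_sigma, Finset.mem_erase, Finset.mem_inter,
      SimpleGraph.mem_neighborFinset] at hx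
    tauto
  let f : fourCycleCompletions G v a × Bool →
      {p : G.Walk v v // p.IsCycle ∧ p.length = 4 ∧ s(v, a) ∈ p.edges} := fun x =>
    have hx := key x.1.1 x.1.2
    if x.2 then
      ⟨.cons hva (.cons hx.2.2.1 (.cons hx.2.2.2.1 (.cons hx.2.2.2.2.symm .nil))), by
        obtain ⟨h1, h2, h3, h4, h5⟩ := hx
        have := hva.ne; have := h3.ne; have := h4.ne; have := h5.ne
        simp [SimpleGraph.Walk.cons_isCycle_iff, SimpleGraph.Walk.cons_isPath_iff]
        grind⟩
    else
      ⟨.cons hx.2.2.2.2 (.cons hx.2.2.2.1.symm (.cons hx.2.2.1.symm (.cons hva.symm .nil))), by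
        obtain ⟨h1, h2, h3, h4, h5⟩ := hx
        have := hva.ne; have := h3.ne; have := h4.ne; have := h5.ne
        simp [SimpleGraph.Walk.cons_isCycle_iff, SimpleGraph.Walk.cons_isPath_iff]
        grind⟩
  have hf : Function.Injective f := by
    rintro ⟨⟨⟨w, b⟩, hx⟩, i⟩ ⟨⟨⟨w', b'⟩, hx'⟩, j⟩ hxy
    have h1 := key _ hx
    have h2 := key _ hx'
    -- The support `v a w b v` or `v b w a v` determines `w`, `b` and the orientation.
    have hs := congrArg (fun p => p.1.support) hxy
    cases i <;> cases j <;> simp [f] at hs h1 h2 ⊢ <;> grind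
  have := Nat.card_le_card_of_injective f hf
  rw [Nat.card_prod] at this
  simp at this
  rw [mul_comm]
  simpa using this

/-- The second-moment bound for the rest of the colour class of `v`. -/
lemma colourClass_bound {k lam : ℕ} (hk : 0 < k) (C : G.Coloring (Fin 2))
    (hdeg : ∀ v, (G.neighborFinset v).card = k)
    (hcyc : ∀ u v : V, G.Adj u v →
      Nat.card {p : G.Walk u u // p.IsCycle ∧ p.length = 4 ∧ s(u, v) ∈ p.edges} = 2 * lam)
    (v : V) :
    k * (k - 1) ^ 2 ≤ ((Finset.univ.filter fun w => C w = C v).erase v).card * (k - 1 + lam) := by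
  set P := (Finset.univ.filter fun w => C w = C v).erase v with hP
  let c : V → ℕ := fun w => (G.neighborFinset v ∩ G.neighborFinset w).card
  have hmem : ∀ w a, (w ∈ P ∧ a ∈ G.neighborFinset v ∩ G.neighborFinset w) ↔
      (w ∈ (G.neighborFinset a).erase v ∧ a ∈ G.neighborFinset v) := by
    intro w a
    simp only [hP, Finset.mem_erase, Finset.mem_filter, Finset.mem_univ, true_and,
      Finset.mem_inter, SimpleGraph.mem_neighborFinset]
    constructor
    · rintro ⟨⟨h1, -⟩, h2, h3⟩
      exact ⟨⟨h1, h3.symm⟩, h2⟩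
    · rintro ⟨⟨h1, h3⟩, h2⟩
      have := C.valid h2
      have := C.valid h3
      exact ⟨⟨h1, by omega⟩, h2, h3.symm⟩
  have herase : ∀ a ∈ G.neighborFinset v, ((G.neighborFinset a).erase v).card = k - 1 := by
    intro a ha
    rw [Finset.card_erase_of_mem, hdeg]
    simpa [SimpleGraph.adj_comm] using ha
  have hsum : ∑ w ∈ P, c w = k * (k - 1) := by
    calc ∑ w ∈ P, c w = ∑ w ∈ P, ∑ a ∈ G.neighborFinset v ∩ G.neighborFinset w, 1 := by simp [c]
      _ = ∑ a ∈ G.neighborFinset v, ∑ w ∈ (G.neighborFinset a).erase v, 1 :=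
        Finset.sum_comm' hmem
      _ = ∑ a ∈ G.neighborFinset v, (k - 1) :=
        Finset.sum_congr rfl fun a ha => by simp only [← herase a ha, Finset.card_eq_sum_ones]
      _ = k * (k - 1) := by simp [← hdeg v]
  have hsq : ∑ w ∈ P, c w ^ 2 ≤ k * (k - 1 + lam) := by
    calc ∑ w ∈ P, c w ^ 2
        = ∑ w ∈ P, ∑ a ∈ G.neighborFinset v ∩ G.neighborFinset w, c w :=
          Finset.sum_congr rfl fun w _ => by simp [c, sq]
      _ = ∑ a ∈ G.neighborFinset v, ∑ w ∈ (G.neighborFinset a).erase v, c w :=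
        Finset.sum_comm' hmem
      _ ≤ ∑ a ∈ G.neighborFinset v, (k - 1 + lam) := by
        refine Finset.sum_le_sum fun a ha => ?_
        have hva : G.Adj v a := by simpa using ha
        have h1 := two_mul_card_fourCycleCompletions_le G hva
        rw [hcyc v a hva, fourCycleCompletions, Finset.card_sigma] at h1
        -- `a` is itself a common neighbour of `v` and `w`; removing it leaves the 4-cycles.
        have h2 : ∑ w ∈ (G.neighborFinset a).erase v, c w =
            ∑ w ∈ (G.neighborFinset a).erase v,
              (1 + ((G.neighborFinset v ∩ G.neighborFinset w).erase a).card) := by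
          refine Finset.sum_congr rfl fun w hw => ?_
          have hw' := ((hmem w a).2 ⟨hw, ha⟩).2
          have := Finset.card_erase_add_one hw'
          simp only [c]
          omega
        rw [h2, Finset.sum_add_distrib, ← Finset.card_eq_sum_ones, herase a ha]
        omega
      _ = k * (k - 1 + lam) := by simp [← hdeg v]
  have hcs : (∑ w ∈ P, c w) ^ 2 ≤ P.card * ∑ w ∈ P, c w ^ 2 := sq_sum_le_card_mul_sum_sq
  rw [hsum] at hcs
  have h3 := hcs.trans (Nat.mul_le_mul_left _ hsq)
  refine Nat.le_of_mul_le_mul_left ?_ hk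
  calc k * (k * (k - 1) ^ 2) = (k * (k - 1)) ^ 2 := by ring
    _ ≤ _ := h3
    _ = _ := by ring

end Aux

/-- Eigenvalue lower bound for bipartite edge-girth-regular graphs of girth 4:
if `G` is a bipartite `egr(n, k, 4, λ)` graph with `k ≥ 3`, then
`n(λ + k - 1) ≥ 2(k³ - 2k² + 2k - 1 + λ)`. -/
theorem bipartite_egr_girth4_lower_bound (n k lam : ℕ) (hk : 3 ≤ k) {V : Type*}
    (G : SimpleGraph V) (hbip : G.Colorable 2) (h : G.IsEGR n k 4 lam) :
    (n : ℤ) * (lam + k - 1) ≥ 2 * ((k : ℤ) ^ 3 - 2 * k ^ 2 + 2 * k - 1 + lam) := by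
  classical
  obtain ⟨hfin, hn, hreg, hg, hcyc⟩ := h
  have := Fintype.ofFinite V
  obtain ⟨C⟩ := hbip
  have hdeg : ∀ v, (G.neighborFinset v).card = k := by
    intro v
    rw [← hreg v, Set.ncard_eq_toFinset_card', SimpleGraph.neighborFinset]
  have hne : Nonempty V := by
    by_contra hemp
    rw [not_nonempty_iff] at hemp
    have hac : G.IsAcyclic := fun v => isEmptyElim v
    rw [SimpleGraph.egirth_eq_top.2 hac] at hg
    simp at hg
  obtain ⟨v⟩ := hne
  obtain ⟨u, hu⟩ : (G.neighborFinset v).Nonempty := by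
    rw [← Finset.card_pos, hdeg]; omega
  have hvu : C v ≠ C u := C.valid (by simpa using hu)
  have h1 := colourClass_bound G (by omega) C hdeg hcyc v
  have h2 := colourClass_bound G (by omega) C hdeg hcyc u
  have e1 := Finset.card_erase_add_one
    (show v ∈ Finset.univ.filter fun w => C w = C v by simp)
  have e2 := Finset.card_erase_add_one
    (show u ∈ Finset.univ.filter fun w => C w = C u by simp)
  have e3 : (Finset.univ.filter fun w => C w = C v).card +
      (Finset.univ.filter fun w => C w = C u).card = n := by
    have hu' : (Finset.univ.filter fun w => C w = C u) =
        Finset.univ.filter fun w => ¬ C w = C v :=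
      Finset.filter_congr fun w _ => by omega
    rw [hu', Finset.card_filter_add_card_filter_not, Finset.card_univ, ← hn,
      Nat.card_eq_fintype_card]
  rw [← e1, ← e2] at e3
  generalize ((Finset.univ.filter fun w => C w = C v).erase v).card = p at *
  generalize ((Finset.univ.filter fun w => C w = C u).erase u).card = q at *
  obtain ⟨m, rfl⟩ : ∃ m, k = m + 1 := ⟨k - 1, by omega⟩
  simp only [Nat.add_sub_cancel] at h1 h2
  subst e3
  zify at h1 h2
  push_cast
  nlinarith
end

section
/- For every integer q ≥ 2, every bipartite egr(n, q²+q+1, 4, q³+q²) graph satisfies n ≥ 2(q³+q²+q+1). -/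
/-!
Fix a vertex `u` of degree `k = q² + q + 1` and, for every other vertex `w` of its colour class,
let `c w` be the number of common neighbours of `u` and `w`. Since all neighbours of a neighbour of
`u` have the colour of `u`, counting paths `u, v, w` gives `∑ c w = k (k - 1)`. A 4-cycle through
the edge `uv` is a choice of `w ≠ u` adjacent to `v` and of a second common neighbour `b ≠ v` of `u`
and `w`, so `∑ (c w) ^ 2 = k (k - 1 + λ)`; only `≤` is needed, and it follows from an injection of
such pairs `(w, b)`, each taken in both orientations, into the closed walks counted at `u`
(`two_mul_card_squares_le`). By Cauchy–Schwarz the colour class of `u` has at least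
`1 + k (k - 1)² / (k - 1 + λ)` vertices (`color_class_lower_bound`), which for `λ = q³ + q²` equals
`q³ + q² + q + 1`. Applying this at both ends of an edge bounds the two colour classes separately.
-/

open SimpleGraph

/-- The pairs `(w, b)` such that `u, v, w, b` are the consecutive vertices of a 4-cycle
(when `u` and `v` are adjacent). -/
noncomputable def squaresThrough {V : Type*} [Fintype V] (G : SimpleGraph V) (u v : V) :
    Finset (V × V) :=
  open Classical in
  Finset.univ.filter fun x => x.1 ≠ u ∧ x.2 ≠ v ∧ G.Adj v x.1 ∧ G.Adj x.1 x.2 ∧ G.Adj x.2 u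

lemma isCycle_square {V : Type*} {G : SimpleGraph V} {u v w b : V} (h1 : G.Adj u v)
    (h2 : G.Adj v w) (h3 : G.Adj w b) (h4 : G.Adj b u) (hwu : w ≠ u) (hbv : b ≠ v) :
    (Walk.cons h1 (Walk.cons h2 (Walk.cons h3 (Walk.cons h4 Walk.nil)))).IsCycle := by
  have := h1.ne; have := h2.ne; have := h3.ne; have := h4.ne
  rw [Walk.cons_isCycle_iff]
  simp [Walk.isPath_def]
  grind

/-- Each pair in `squaresThrough G u v` yields two closed walks at `u` through the edge `uv`,
one for each orientation of the 4-cycle, and all these walks are distinct. -/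
lemma two_mul_card_squares_le {V : Type*} [Fintype V] (G : SimpleGraph V) {u v : V}
    (huv : G.Adj u v) :
    2 * (squaresThrough G u v).card ≤
      Nat.card {p : G.Walk u u // p.IsCycle ∧ p.length = 4 ∧ s(u, v) ∈ p.edges} := by
  classical
  have hfin : Finite {p : G.Walk u u // p.IsCycle ∧ p.length = 4 ∧ s(u, v) ∈ p.edges} := by
    have : Finite {p : G.Walk u u // p.length = 4} :=
      (Set.toFinite {p : G.Walk u u | p.length = 4}).to_subtype
    exact Finite.of_injective
      (fun p => (⟨p.1, p.2.2.1⟩ : {p : G.Walk u u // p.length = 4}))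
      fun p p' h => Subtype.ext (by simpa using h)
  have hmem : ∀ x : squaresThrough G u v, x.1.1 ≠ u ∧ x.1.2 ≠ v ∧ G.Adj v x.1.1 ∧
      G.Adj x.1.1 x.1.2 ∧ G.Adj x.1.2 u := fun x => by
    simpa [squaresThrough] using x.2
  let f : squaresThrough G u v ⊕ squaresThrough G u v →
      {p : G.Walk u u // p.IsCycle ∧ p.length = 4 ∧ s(u, v) ∈ p.edges} := Sum.elim
    (fun x => ⟨Walk.cons huv (Walk.cons (hmem x).2.2.1 (Walk.cons (hmem x).2.2.2.1
        (Walk.cons (hmem x).2.2.2.2 Walk.nil))),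
      isCycle_square _ _ _ _ (hmem x).1 (hmem x).2.1, rfl, by simp⟩)
    (fun x => ⟨Walk.cons (hmem x).2.2.2.2.symm (Walk.cons (hmem x).2.2.2.1.symm
        (Walk.cons (hmem x).2.2.1.symm (Walk.cons huv.symm Walk.nil))),
      isCycle_square _ _ _ _ (hmem x).1 (hmem x).2.1.symm, rfl, by simp⟩)
  have hf : Function.Injective f := by
    intro x y hxy
    have hs := congrArg (fun p => p.1.support) hxy
    rcases x with x | x <;> rcases y with y | y <;>
      have hx := hmem x <;> have hy := hmem y <;>
      simp [f] at hs <;> grind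
  have := Nat.card_le_card_of_injective f hf
  rw [Nat.card_sum] at this
  simp only [Nat.card_eq_fintype_card, Fintype.card_coe] at this ⊢
  omega

lemma color_class_lower_bound {V : Type*} [Fintype V] (G : SimpleGraph V) (C : G.Coloring (Fin 2))
    (q : ℕ) (hq : 2 ≤ q) (hreg : ∀ v : V, (G.neighborSet v).ncard = q ^ 2 + q + 1)
    (hcyc : ∀ u v : V, G.Adj u v →
      Nat.card {p : G.Walk u u // p.IsCycle ∧ p.length = 4 ∧ s(u, v) ∈ p.edges} =
        2 * (q ^ 3 + q ^ 2))
    (u : V) [DecidableEq V] :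
    q ^ 3 + q ^ 2 + q + 1 ≤ (Finset.univ.filter fun w => C w = C u).card := by
  classical
  have hdeg : ∀ v, (G.neighborFinset v).card = q ^ 2 + q + 1 := fun v => by
    rw [← hreg v, ← Set.ncard_coe_finset]
    simp
  set S := (Finset.univ.filter fun w => C w = C u).erase u with hS
  have hScard : S.card + 1 = (Finset.univ.filter fun w => C w = C u).card :=
    Finset.card_erase_add_one (by simp)
  let c : V → ℕ := fun w => (G.neighborFinset u ∩ G.neighborFinset w).card
  -- With two colours, everything at distance two from `u` has the colour of `u`.
  have hSv : ∀ v ∈ G.neighborFinset u, S.filter (fun w => G.Adj v w) =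
      (G.neighborFinset v).erase u := by
    intro v hv
    have huv : C u ≠ C v := C.valid (by simpa using hv)
    ext w
    have : G.Adj v w → C w = C u := fun h => by
      have := C.valid h
      omega
    simp [hS]
    tauto
  have hSvcard : ∀ v ∈ G.neighborFinset u,
      (S.filter (fun w => G.Adj v w)).card = q ^ 2 + q := by
    intro v hv
    rw [hSv v hv, Finset.card_erase_of_mem (by simpa [G.adj_comm] using hv), hdeg]
    rfl
  have hdouble : ∀ F : V → ℕ, ∑ w ∈ S, c w * F w =
      ∑ v ∈ G.neighborFinset u, ∑ w ∈ S.filter (fun w => G.Adj v w), F w := by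
    intro F
    simp only [Finset.sum_filter]
    rw [Finset.sum_comm]
    refine Finset.sum_congr rfl fun w _ => ?_
    rw [← Finset.sum_filter, Finset.sum_const, smul_eq_mul]
    congr 1
    refine congrArg Finset.card ?_
    ext v
    simp [G.adj_comm]
  have hsum : ∑ w ∈ S, c w = (q ^ 2 + q + 1) * (q ^ 2 + q) := by
    have := hdouble fun _ => 1
    simp only [mul_one, Finset.sum_const, smul_eq_mul] at this
    rw [this, Finset.sum_congr rfl hSvcard, Finset.sum_const, hdeg, smul_eq_mul]
  have hinner : ∀ v ∈ G.neighborFinset u, ∑ w ∈ S.filter (fun w => G.Adj v w), c w ≤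
      (q ^ 2 + q) + (q ^ 3 + q ^ 2) := by
    intro v hv
    have huv : G.Adj u v := by simpa using hv
    have h1 : ∀ w ∈ S.filter (fun w => G.Adj v w), c w =
        1 + ((G.neighborFinset u ∩ G.neighborFinset w).erase v).card := by
      intro w hw
      have hvw : G.Adj v w := (Finset.mem_filter.1 hw).2
      rw [add_comm, Finset.card_erase_add_one (by simp [huv, hvw.symm])]
    rw [Finset.sum_congr rfl h1, Finset.sum_add_distrib, Finset.sum_const, hSvcard v hv,
      smul_eq_mul, mul_one, ← Finset.card_sigma]
    have h2 : ((S.filter (fun w => G.Adj v w)).sigma fun w =>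
        (G.neighborFinset u ∩ G.neighborFinset w).erase v).card ≤
        (squaresThrough G u v).card := by
      refine Finset.card_le_card_of_injOn (fun x => (x.1, x.2)) ?_ ?_
      · rintro ⟨w, b⟩ hx
        simp [hS, squaresThrough, G.adj_comm] at hx ⊢
        tauto
      · rintro ⟨w, b⟩ _ ⟨w', b'⟩ _ h
        simpa using h
    have h3 := two_mul_card_squares_le G huv
    rw [hcyc u v huv] at h3
    omega
  have hsq : ∑ w ∈ S, c w ^ 2 ≤ (q ^ 2 + q + 1) * ((q ^ 2 + q) + (q ^ 3 + q ^ 2)) := by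
    simp only [sq (c _)]
    rw [hdouble c]
    refine (Finset.sum_le_sum hinner).trans ?_
    rw [Finset.sum_const, hdeg, smul_eq_mul]
  have hcs : (∑ w ∈ S, c w) ^ 2 ≤ S.card * ∑ w ∈ S, c w ^ 2 := sq_sum_le_card_mul_sum_sq
  rw [hsum] at hcs
  have hmain := hcs.trans (Nat.mul_le_mul_left _ hsq)
  have hpos : 0 < (q ^ 2 + q + 1) * (q * (q + 1) ^ 2) := by positivity
  have : q ^ 3 + q ^ 2 + q ≤ S.card := by
    refine Nat.le_of_mul_le_mul_right ?_ hpos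
    calc _ = ((q ^ 2 + q + 1) * (q ^ 2 + q)) ^ 2 := by ring
      _ ≤ _ := hmain
      _ = _ := by ring
  omega

/-- For every integer `q ≥ 2`, every bipartite `egr(n, q²+q+1, 4, q³+q²)` graph
satisfies `n ≥ 2(q³+q²+q+1)`. -/
theorem bipartite_egr_pencil_lower_bound (q : ℕ) (hq : 2 ≤ q) (n : ℕ) {V : Type*}
    (G : SimpleGraph V) (hbip : G.Colorable 2)
    (h : G.IsEGR n (q ^ 2 + q + 1) 4 (q ^ 3 + q ^ 2)) :
    2 * (q ^ 3 + q ^ 2 + q + 1) ≤ n := by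
  classical
  obtain ⟨hfin, hcard, hreg, hgirth, hcyc⟩ := h
  have := Fintype.ofFinite V
  obtain ⟨C⟩ := hbip
  -- The girth is finite, so there is a cycle and in particular a vertex.
  have hacyc : ¬ G.IsAcyclic := fun h => by
    rw [← egirth_eq_top] at h
    rw [h] at hgirth
    exact absurd hgirth (by decide)
  obtain ⟨u⟩ : Nonempty V := by
    by_contra hV
    rw [not_nonempty_iff] at hV
    exact hacyc fun v => isEmptyElim v
  obtain ⟨v, huv⟩ : (G.neighborSet u).Nonempty := by
    apply Set.nonempty_of_ncard_ne_zero
    rw [hreg u]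
    omega
  have hu := color_class_lower_bound G C q hq hreg hcyc u
  have hv := color_class_lower_bound G C q hq hreg hcyc v
  have hdisj : Disjoint (Finset.univ.filter fun w => C w = C u)
      (Finset.univ.filter fun w => C w = C v) := by
    refine Finset.disjoint_filter.2 fun w _ h1 h2 => C.valid huv (h1.symm.trans h2)
  have hle := Finset.card_le_univ ((Finset.univ.filter fun w => C w = C u) ∪
    (Finset.univ.filter fun w => C w = C v))
  rw [Finset.card_union_of_disjoint hdisj, ← Nat.card_eq_fintype_card, hcard] at hle
  omega
end

section
/- Let k ≥ 3, n > 2, and let G be a bipartite egr(n,k,4,λ) graph satisfying n·(λ+k−1) = 2(k³−2k²+2k−1+λ). Then the characteristic polynomial over ℝ of the adjacency matrix of G equals (X−k)·(X+k)·(X² − (nk−2k²)/(n−2))^{(n−2)/2}; equivalently, the spectrum of G consists of the eigenvalues k and −k, each with multiplicity 1, and √((nk−2k²)/(n−2)) and −√((nk−2k²)/(n−2)), each with multiplicity (n−2)/2. -/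
/-!
Let `A` be the adjacency matrix. Regularity gives `tr A = 0` and `tr A² = nk`. Since each edge lies
on `λ` four-cycles, each vertex is the base of `kλ` directed four-cycles (`card_fourCyclesAt`), and
together with the degenerate closed walks this gives `tr A⁴ = nk(λ + 2k - 1)`
(`adjMatrix_pow_four_diag`).

The all-ones vector and the `±1` vector of the bipartition are eigenvectors for `k` and `-k`. Put
`μ = (nk - 2k²)/(n - 2)`. The remaining `n - 2` eigenvalues have sum `0` and mean square `μ`, and the
hypothesis relating `n`, `k`, `λ` says exactly that the mean of their fourth powers is `μ²`. This is
equality in Cauchy–Schwarz, so all their squares equal `μ`; as they sum to zero, both square roots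
of `μ` occur equally often (`prod_X_sub_C_of_power_sums`). If `μ = 0`, the evenness of `n - 2` comes
from `n = 2k`. Connectedness plays no role.
-/

open SimpleGraph

/-! ### Counting closed walks of length four -/

section Counting

variable {V : Type*} [Fintype V] [DecidableEq V] (G : SimpleGraph V) [DecidableRel G.Adj]

/-- The ordered triples `(a, b, c)` such that `u, a, b, c, u` is a 4-cycle of `G`; these are the
4-cycles through `u` together with a direction of traversal. -/
def fourCyclesAt (u : V) : Finset (V × V × V) :=
  {t | G.Adj u t.1 ∧ G.Adj t.1 t.2.1 ∧ G.Adj t.2.1 t.2.2 ∧ G.Adj t.2.2 u ∧ t.1 ≠ t.2.2 ∧ t.2.1 ≠ u}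

/-- The cycles of length 4 based at `u` and using the edge `uv` are the triples of
`fourCyclesAt G u` in which `v` is the first or the last vertex. -/
lemma card_cycles_through_edge (u v : V) :
    Nat.card {p : G.Walk u u // p.IsCycle ∧ p.length = 4 ∧ s(u, v) ∈ p.edges} =
      ((fourCyclesAt G u).filter (fun t => t.1 = v ∨ t.2.2 = v)).card := by
  rw [← Nat.card_eq_finsetCard]
  symm
  refine Nat.card_eq_of_bijective (fun t => ?f) ?_
  case f =>
    have ht := t.2
    simp only [fourCyclesAt, Finset.mem_filter, Finset.mem_univ, true_and] at ht
    refine ⟨.cons ht.1.1 (.cons ht.1.2.1 (.cons ht.1.2.2.1 (.cons ht.1.2.2.2.1 .nil))), ?_, rfl, ?_⟩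
    · obtain ⟨⟨h1, h2, h3, h4, h5, h6⟩, -⟩ := ht
      simp [Walk.cons_isCycle_iff, Prod.ext_iff, h1.ne, h1.ne', h2.ne, h3.ne, h4.ne, h4.ne', h5, h6,
        h6.symm]
    · obtain ⟨⟨h1, h2, h3, h4, h5, h6⟩, h7 | h7⟩ := ht <;> simp [h7]
  constructor
  · rintro ⟨⟨a, b, c⟩, h⟩ ⟨⟨a', b', c'⟩, h'⟩ heq
    have hw := Subtype.ext_iff.1 heq
    have h1 := congrArg (fun p : G.Walk u u => p.getVert 1) hw
    have h2 := congrArg (fun p : G.Walk u u => p.getVert 2) hw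
    have h3 := congrArg (fun p : G.Walk u u => p.getVert 3) hw
    simp at h1 h2 h3
    subst h1 h2 h3
    rfl
  · rintro ⟨p, hc, hl, he⟩
    match p, hc, hl, he with
    | .cons (v := a) h1 (.cons (v := b) h2 (.cons (v := c) h3 (.cons h4 .nil))), hc, hl, he =>
      simp [Walk.cons_isCycle_iff] at hc he
      refine ⟨⟨(a, b, c), ?_⟩, rfl⟩
      simp [fourCyclesAt]
      grind

/-- Each directed 4-cycle at `u` uses exactly two of the edges at `u`. -/
lemma card_fourCyclesAt (u : V) (k lam : ℕ) (hreg : (G.neighborSet u).ncard = k)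
    (hlam : ∀ v, G.Adj u v →
      Nat.card {p : G.Walk u u // p.IsCycle ∧ p.length = 4 ∧ s(u, v) ∈ p.edges} = 2 * lam) :
    (fourCyclesAt G u).card = k * lam := by
  have hdeg : (G.neighborFinset u).card = k := by
    rw [← hreg, ← Set.ncard_coe_finset, coe_neighborFinset]
  have h1 : ∑ v ∈ G.neighborFinset u,
      ((fourCyclesAt G u).filter (fun t => t.1 = v ∨ t.2.2 = v)).card = k * (2 * lam) := by
    rw [Finset.sum_congr rfl (g := fun _ => 2 * lam), Finset.sum_const, hdeg, smul_eq_mul]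
    intro v hv
    rw [← card_cycles_through_edge]
    exact hlam v (by simpa using hv)
  have h2 : ∑ v ∈ G.neighborFinset u,
      ((fourCyclesAt G u).filter (fun t => t.1 = v ∨ t.2.2 = v)).card =
      (fourCyclesAt G u).card * 2 := by
    have := Finset.sum_card_bipartiteAbove_eq_sum_card_bipartiteBelow
      (s := G.neighborFinset u) (t := fourCyclesAt G u) (fun v t => t.1 = v ∨ t.2.2 = v)
    simp only [Finset.bipartiteAbove, Finset.bipartiteBelow] at this
    rw [this, Finset.sum_congr rfl (g := fun _ => 2), Finset.sum_const, smul_eq_mul]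
    rintro ⟨a, b, c⟩ ht
    simp only [fourCyclesAt, Finset.mem_filter, Finset.mem_univ, true_and] at ht
    obtain ⟨hua, -, -, hcu, hac, -⟩ := ht
    rw [← Finset.card_pair hac]
    congr 1
    ext w
    simp only [Finset.mem_filter, mem_neighborFinset, Finset.mem_insert, Finset.mem_singleton]
    constructor
    · rintro ⟨-, h | h⟩ <;> simp [h]
    · rintro (h | h)
      · subst h; exact ⟨hua, Or.inl rfl⟩
      · subst h; exact ⟨hcu.symm, Or.inr rfl⟩
  have : k * (2 * lam) = (fourCyclesAt G u).card * 2 := h1.symm.trans h2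
  linarith

/-- The closed walks `u, a, b, c, u` are the 4-cycles together with those having `a = c`
(there are `k²`) or `b = u` (again `k²`), where `k` walks satisfy both. -/
lemma adjMatrix_pow_four_diag (u : V) (k : ℕ) (hreg : ∀ v, G.degree v = k) :
    ((G.adjMatrix ℝ) ^ 4) u u = (fourCyclesAt G u).card + 2 * (k : ℝ) ^ 2 - k := by
  set A := G.adjMatrix ℝ with hA
  have hrow : ∀ v, ∑ w, A v w = k := by
    intro v
    simp [hA, adjMatrix_apply, ← hreg v, ← card_neighborFinset_eq_degree,
      neighborFinset_eq_filter]
  have hsq : ∀ v w, A v w * A v w = A v w := by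
    intro v w
    simp [hA, adjMatrix_apply]
  have hsymm : ∀ v w, A v w = A w v := by
    intro v w
    simp [hA, adjMatrix_apply, G.adj_comm]
  have h4 : (A ^ 4) u u = ∑ a, ∑ b, ∑ c, A u a * (A a b * (A b c * A c u)) := by
    have : A ^ 4 = A * (A * (A * A)) := by noncomm_ring
    rw [this]
    simp only [Matrix.mul_apply, Finset.mul_sum]
  have hcard : ((fourCyclesAt G u).card : ℝ) = ∑ a, ∑ b, ∑ c,
      (A u a * (A a b * (A b c * A c u))
        - (if a = c then A u a * (A a b * (A b c * A c u)) else 0)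
        - (if b = u then A u a * (A a b * (A b c * A c u)) else 0)
        + (if b = u then (if a = c then A u a * (A a b * (A b c * A c u)) else 0) else 0)) := by
    rw [fourCyclesAt, Finset.card_filter, Fintype.sum_prod_type]
    simp only [Fintype.sum_prod_type, Nat.cast_sum]
    refine Finset.sum_congr rfl fun a _ => Finset.sum_congr rfl fun b _ =>
      Finset.sum_congr rfl fun c _ => ?_
    simp only [hA, adjMatrix_apply]
    by_cases h1 : G.Adj u a <;> by_cases h2 : G.Adj a b <;> by_cases h3 : G.Adj b c <;>
      by_cases h4 : G.Adj c u <;> by_cases h5 : a = c <;> by_cases h6 : b = u <;>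
      simp [h1, h2, h3, h4, h5, h6]
  have e1 : ∑ a, ∑ b, ∑ c, (if a = c then A u a * (A a b * (A b c * A c u)) else 0)
      = (k : ℝ) ^ 2 := by
    simp only [Finset.sum_ite_eq, Finset.mem_univ, if_true]
    have : ∀ a b, A u a * (A a b * (A b a * A a u)) = A u a * A a b := by
      intro a b
      rw [hsymm b a, hsymm a u, ← hsq u a, ← hsq a b, hsq a b, hsq u a]
      linear_combination (A u a * A u a) * hsq a b + A a b * hsq u a
    simp only [this, ← Finset.mul_sum, hrow, ← Finset.sum_mul]
    ring
  have e2 : ∑ a, ∑ b, ∑ c, (if b = u then A u a * (A a b * (A b c * A c u)) else 0)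
      = (k : ℝ) ^ 2 := by
    have : ∀ a, ∑ b, ∑ c, (if b = u then A u a * (A a b * (A b c * A c u)) else 0)
        = A u a * k := by
      intro a
      rw [Finset.sum_comm]
      simp only [Finset.sum_ite_eq', Finset.mem_univ, if_true]
      rw [← hrow u, Finset.mul_sum]
      refine Finset.sum_congr rfl fun c _ => ?_
      rw [hsymm c u, hsymm a u]
      linear_combination (A u a * A u a) * hsq u c + A u c * hsq u a
    simp only [this, ← Finset.sum_mul, hrow]
    ring
  have e3 : ∑ a, ∑ b, ∑ c,
      (if b = u then (if a = c then A u a * (A a b * (A b c * A c u)) else 0) else 0)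
      = (k : ℝ) := by
    rw [← hrow u]
    refine Finset.sum_congr rfl fun a _ => ?_
    rw [Finset.sum_comm]
    simp only [Finset.sum_ite_eq', Finset.sum_ite_eq, Finset.mem_univ, if_true]
    rw [hsymm a u]
    linear_combination (A u a * A u a + A u a + 1) * hsq u a
  rw [hcard, h4]
  simp only [Finset.sum_add_distrib, Finset.sum_sub_distrib]
  rw [e1, e2, e3]
  ring

end Counting

/-! ### Eigenvalues -/

lemma mem_range_eigenvalues {V : Type*} [Fintype V] [DecidableEq V] {A : Matrix V V ℝ}
    (hA : A.IsHermitian) (x : V → ℝ) (hx : x ≠ 0) (t : ℝ) (h : A.mulVec x = t • x) :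
    ∃ i, hA.eigenvalues i = t := by
  have hdet : (Matrix.scalar V t - A).det = 0 := by
    rw [← Matrix.exists_mulVec_eq_zero_iff]
    refine ⟨x, hx, ?_⟩
    rw [Matrix.sub_mulVec, h, Matrix.scalar_apply, ← Matrix.smul_one_eq_diagonal,
      Matrix.smul_mulVec, Matrix.one_mulVec, sub_self]
  rw [← Matrix.eval_charpoly, hA.charpoly_eq, Polynomial.eval_prod, Finset.prod_eq_zero_iff] at hdet
  obtain ⟨i, -, hi⟩ := hdet
  refine ⟨i, ?_⟩
  simp at hi
  linarith

lemma trace_pow_eq_sum_eigenvalues_pow {V : Type*} [Fintype V] [DecidableEq V] {A : Matrix V V ℝ}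
    (hA : A.IsHermitian) (m : ℕ) : (A ^ m).trace = ∑ i, hA.eigenvalues i ^ m := by
  conv_lhs => rw [hA.spectral_theorem, ← map_pow, Unitary.conjStarAlgAut_apply,
    Matrix.trace_mul_cycle]
  simp [Matrix.diagonal_pow, Matrix.trace_diagonal]

/-- The equality case of Cauchy–Schwarz: a family whose first, second and fourth power sums are
those of `±√μ` with equal multiplicities consists of these values. -/
lemma prod_X_sub_C_of_power_sums {ι : Type*} (S : Finset ι) (e : ι → ℝ) (μ : ℝ)
    (h1 : ∑ i ∈ S, e i = 0) (h2 : ∑ i ∈ S, e i ^ 2 = S.card * μ)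
    (h4 : ∑ i ∈ S, e i ^ 4 = S.card * μ ^ 2) (hμ : μ = 0 → Even S.card) :
    ∏ i ∈ S, (Polynomial.X - Polynomial.C (e i)) =
      (Polynomial.X ^ 2 - Polynomial.C μ) ^ (S.card / 2) := by
  have hsum : ∑ i ∈ S, (e i ^ 2 - μ) ^ 2 = 0 := by
    have : ∀ i, (e i ^ 2 - μ) ^ 2 = e i ^ 4 - 2 * μ * e i ^ 2 + μ ^ 2 := fun i => by ring
    simp only [this, Finset.sum_add_distrib, Finset.sum_sub_distrib, ← Finset.mul_sum, h2, h4,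
      Finset.sum_const, nsmul_eq_mul]
    ring
  have hsq : ∀ i ∈ S, e i ^ 2 = μ := by
    intro i hi
    have := (Finset.sum_eq_zero_iff_of_nonneg (fun i _ => sq_nonneg (e i ^ 2 - μ))).1 hsum i hi
    have := pow_eq_zero_iff (two_ne_zero) |>.1 this
    linarith
  rcases eq_or_ne μ 0 with h0 | h0
  · subst h0
    obtain ⟨m, hm⟩ := hμ rfl
    have hz : ∀ i ∈ S, Polynomial.X - Polynomial.C (e i) = (Polynomial.X : Polynomial ℝ) := by
      intro i hi
      have : e i = 0 := by simpa using hsq i hi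
      simp [this]
    rw [Finset.prod_congr rfl hz, Finset.prod_const, map_zero, sub_zero, ← pow_mul]
    congr 1
    omega
  · rcases S.eq_empty_or_nonempty with rfl | ⟨j, hj⟩
    · simp
    -- Any member of the family serves as the square root of `μ`.
    set r := e j with hr
    have hr2 : r ^ 2 = μ := hsq j hj
    have hr0 : r ≠ 0 := by
      rintro h
      apply h0
      rw [← hr2, h]
      ring
    have hpm : ∀ i ∈ S, ¬ e i = r → e i = -r := by
      intro i hi hne
      have : e i ^ 2 = r ^ 2 := by rw [hsq i hi, hr2]
      exact (sq_eq_sq_iff_eq_or_eq_neg.1 this).resolve_left hne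
    have hp : ∀ i ∈ S.filter (fun i => e i = r), e i = r := fun i hi => (Finset.mem_filter.1 hi).2
    have hq : ∀ i ∈ S.filter (fun i => ¬ e i = r), e i = -r := fun i hi =>
      hpm i (Finset.mem_filter.1 hi).1 (Finset.mem_filter.1 hi).2
    have hcard := Finset.card_filter_add_card_filter_not (s := S) (fun i => e i = r)
    rw [← Finset.sum_filter_add_sum_filter_not S (fun i => e i = r), Finset.sum_congr rfl hp,
      Finset.sum_congr rfl hq, Finset.sum_const, Finset.sum_const, nsmul_eq_mul, nsmul_eq_mul] at h1
    have hab : (S.filter (fun i => e i = r)).card = (S.filter (fun i => ¬ e i = r)).card := by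
      have : (((S.filter (fun i => e i = r)).card : ℝ) -
        ((S.filter (fun i => ¬ e i = r)).card : ℝ)) * r = 0 := by linarith
      have := (mul_eq_zero.1 this).resolve_right hr0
      exact_mod_cast sub_eq_zero.1 this
    rw [← Finset.prod_filter_mul_prod_filter_not S (fun i => e i = r),
      Finset.prod_congr rfl (fun i hi => by rw [hp i hi]),
      Finset.prod_congr (s₁ := S.filter (fun i => ¬ e i = r)) rfl (fun i hi => by rw [hq i hi]),
      Finset.prod_const, Finset.prod_const, ← hab, ← mul_pow, ← hr2]
    congr 1
    · rw [Polynomial.C_neg, Polynomial.C_pow]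
      ring
    · omega

/-- If a bipartite `egr(n, k, 4, λ)` graph with `k ≥ 3` and `n > 2` attains the
eigenvalue lower bound with equality, i.e. `n(λ + k - 1) = 2(k³ - 2k² + 2k - 1 + λ)`,
then the characteristic polynomial of its adjacency matrix over `ℝ` is
`(X - k)(X + k)(X² - (nk - 2k²)/(n - 2))^((n-2)/2)`. -/
theorem bipartite_egr_girth4_extremal_spectrum (n k lam : ℕ) (hk : 3 ≤ k) (hn : 2 < n)
    {V : Type*} [Fintype V] [DecidableEq V] (G : SimpleGraph V) [DecidableRel G.Adj]
    (hbip : G.Colorable 2) (h : G.IsEGR n k 4 lam)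
    (heq : (n : ℤ) * (lam + k - 1) = 2 * ((k : ℤ) ^ 3 - 2 * k ^ 2 + 2 * k - 1 + lam)) :
    (G.adjMatrix ℝ).charpoly =
      (Polynomial.X - Polynomial.C (k : ℝ)) * (Polynomial.X + Polynomial.C (k : ℝ)) *
        (Polynomial.X ^ 2 -
          Polynomial.C (((n : ℝ) * k - 2 * k ^ 2) / ((n : ℝ) - 2))) ^ ((n - 2) / 2) := by
  obtain ⟨-, hcard, hreg, -, hlam⟩ := h
  rw [Nat.card_eq_fintype_card] at hcard
  have hdeg : ∀ v, G.degree v = k := by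
    intro v
    rw [← hreg v, ← card_neighborFinset_eq_degree, ← Set.ncard_coe_finset, coe_neighborFinset]
  have hne : Nonempty V := Fintype.card_pos_iff.1 (by omega)
  have hA : (G.adjMatrix ℝ).IsHermitian := by
    rw [Matrix.IsHermitian, Matrix.conjTranspose_eq_transpose_of_trivial, transpose_adjMatrix]
  have hk0 : (3 : ℝ) ≤ k := by exact_mod_cast hk
  have hn0 : (2 : ℝ) < n := by exact_mod_cast hn
  obtain ⟨i, hi⟩ : ∃ i, hA.eigenvalues i = k := by
    refine mem_range_eigenvalues hA (fun _ => 1) ?_ _ ?_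
    · exact fun h => one_ne_zero (congrFun h hne.some)
    · ext v
      simp [adjMatrix_mulVec_apply, hdeg]
  obtain ⟨j, hj⟩ : ∃ j, hA.eigenvalues j = -k := by
    obtain ⟨c⟩ := hbip
    -- The eigenvector is `1` on one side of the bipartition and `-1` on the other.
    refine mem_range_eigenvalues hA (fun v => if c v = 0 then 1 else -1) ?_ _ ?_
    · intro h
      have := congrFun h hne.some
      simp only [Pi.zero_apply] at this
      split_ifs at this <;> norm_num at this
    · ext v
      rw [adjMatrix_mulVec_apply, Finset.sum_congr rfl
        (g := fun _ => -(if c v = 0 then (1 : ℝ) else -1)), Finset.sum_const,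
        card_neighborFinset_eq_degree, hdeg]
      · simp only [Pi.smul_apply, nsmul_eq_mul, smul_eq_mul]
        ring
      · intro w hw
        have hcw : c v ≠ c w := c.valid (by simpa using hw)
        have h1 : c v = 0 ∨ c v = 1 := by omega
        have h2 : c w = 0 ∨ c w = 1 := by omega
        rcases h1 with h1 | h1 <;> rcases h2 with h2 | h2 <;> simp_all
  have hij : i ≠ j := by
    rintro rfl
    linarith
  set e := hA.eigenvalues with he
  set S : Finset V := (Finset.univ.erase i).erase j with hS
  have hjmem : j ∈ Finset.univ.erase i := Finset.mem_erase.2 ⟨hij.symm, Finset.mem_univ _⟩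
  have hScard : S.card = n - 2 := by
    rw [hS, Finset.card_erase_of_mem hjmem, Finset.card_erase_of_mem (Finset.mem_univ _),
      Finset.card_univ, hcard]
    omega
  have hScard' : (S.card : ℝ) = n - 2 := by
    rw [hScard, Nat.cast_sub hn.le]
    norm_num
  have hsplit : ∀ m : ℕ, ∑ l ∈ S, e l ^ m = ((G.adjMatrix ℝ) ^ m).trace - (k : ℝ) ^ m
      - (-(k : ℝ)) ^ m := by
    intro m
    rw [trace_pow_eq_sum_eigenvalues_pow hA, ← he, ← Finset.add_sum_erase _ _ (Finset.mem_univ i),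
      ← Finset.add_sum_erase _ _ hjmem, hi, hj]
    ring
  have heqR : (n : ℝ) * (lam + k - 1) = 2 * ((k : ℝ) ^ 3 - 2 * k ^ 2 + 2 * k - 1 + lam) := by
    exact_mod_cast heq
  set μ : ℝ := ((n : ℝ) * k - 2 * k ^ 2) / ((n : ℝ) - 2) with hμ
  have hn2 : (n : ℝ) - 2 ≠ 0 := by linarith
  have hμ' : ((n : ℝ) - 2) * μ = (n : ℝ) * k - 2 * k ^ 2 := by
    rw [hμ]
    field_simp
  have h1 : ∑ l ∈ S, e l = 0 := by
    have := hsplit 1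
    simp only [pow_one, trace_adjMatrix] at this
    rw [this]
    ring
  have h2 : ∑ l ∈ S, e l ^ 2 = S.card * μ := by
    rw [hsplit 2, hScard', hμ', pow_two (G.adjMatrix ℝ), Matrix.trace]
    simp only [Matrix.diag_apply, adjMatrix_mul_self_apply_self, hdeg, Finset.sum_const,
      Finset.card_univ, hcard, nsmul_eq_mul]
    ring
  have h4 : ∑ l ∈ S, e l ^ 4 = S.card * μ ^ 2 := by
    have hdiag : ∀ u, ((G.adjMatrix ℝ) ^ 4) u u = k * lam + 2 * (k : ℝ) ^ 2 - k := by
      intro u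
      rw [adjMatrix_pow_four_diag G u k hdeg, card_fourCyclesAt G u k lam (hreg u) (hlam u)]
      push_cast
      ring
    rw [hsplit 4, hScard', Matrix.trace]
    simp only [Matrix.diag_apply, hdiag, Finset.sum_const, Finset.card_univ, hcard, nsmul_eq_mul]
    apply mul_left_cancel₀ hn2
    have : ((n : ℝ) - 2) * (((n : ℝ) - 2) * μ ^ 2) = ((n : ℝ) * k - 2 * k ^ 2) ^ 2 := by
      rw [← hμ']
      ring
    rw [this]
    linear_combination (n : ℝ) * k * heqR
  have hev : μ = 0 → Even S.card := by
    intro h0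
    -- `μ = 0` forces `n = 2k`.
    rw [h0, mul_zero] at hμ'
    have h5 : (k : ℝ) * (n - 2 * k) = 0 := by linarith
    have h6 : (n : ℝ) = 2 * k := by
      have := (mul_eq_zero.1 h5).resolve_left (by linarith)
      linarith
    have h7 : n = 2 * k := by exact_mod_cast h6
    rw [hScard, Nat.even_iff]
    omega
  rw [hA.charpoly_eq, ← Finset.mul_prod_erase _ _ (Finset.mem_univ i),
    ← Finset.mul_prod_erase _ _ hjmem, ← mul_assoc, ← hScard]
  have := prod_X_sub_C_of_power_sums S e μ h1 h2 h4 hev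
  simp only [RCLike.ofReal_real_eq_id, id]
  rw [← this, ← he, hi, hj, Polynomial.C_neg, sub_neg_eq_add]
end

section
/- Let s ≥ 1, k ≥ 2, and let G be a k-regular simple graph whose girth is at least 2s−1. Then for every vertex v of G, the number N of cycle-free closed walks of length 2s based at v satisfies C_s·k·(k−1)^{s−1} ≤ N ≤ C_s·k^s, where C_s is the s-th Catalan number. -/
/-!
A cycle-free closed walk runs around a plane tree: its first step `v → u` can only be undone by
`u → v`, because returning to `v` for the first time through any other neighbour would close a
cycle.  Cutting at that first return writes the walk uniquely as `v → u`, a closed walk at `u`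
avoiding `v`, `u → v`, and another closed walk at `v`.  Iterating this Catalan decomposition encodes
the walk as a binary tree with `s` nodes labelled by the vertices `u` (`IsCode`, `exists_code`).

Conversely every such labelled tree spells a closed walk of length `2s` (`exists_walk`), distinct
trees spell distinct walks (`word_inj`), and the walk traverses at most `s` distinct edges; since
the girth is at least `2s - 1`, these contain no cycle.  So `N` is the number of codes, which obeys
the Catalan recursion with `k` choices for each step leaving the base point `v` and `k - 1`
choices for every other step that moves away from `v` (`card_bounds`, `card_root_lower`).
-/

open SimpleGraph

namespace CycleFreeWalk

open BinaryTree

variable {V : Type*} (G : SimpleGraph V)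

/-- The vertices visited, after the start `v`, by the closed walk at `v` encoded by a tree:
`node u A B` stands for the step to `u`, the walk of `A` at `u`, the step back to `v`, and the walk
of `B` at `v`. -/
def word : V → BinaryTree V → List V
  | _, .nil => []
  | v, .node u A B => u :: (word u A ++ v :: word v B)

/-- `IsCode G X v t`: the tree `t` encodes a closed walk at `v` in the universal cover of `G` whose
steps away from the base point avoid `X`.  Inside an excursion from `v` to `u`, the steps away from
`u` avoid the parent `v`, which makes the encoding unambiguous. -/
def IsCode : Set V → V → BinaryTree V → Prop
  | _, _, .nil => True
  | X, v, .node u A B => G.Adj v u ∧ u ∉ X ∧ IsCode {v} u A ∧ IsCode X v B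

/-- The codes of closed walks of length `2 * n`. -/
abbrev Code (X : Set V) (v : V) (n : ℕ) : Type _ :=
  {t : BinaryTree V // IsCode G X v t ∧ t.numNodes = n}

variable {G}

lemma length_word (v : V) (t : BinaryTree V) : (word v t).length = 2 * t.numNodes := by
  induction t generalizing v with
  | nil => rfl
  | node u A B ihA ihB => simp [word, numNodes, ihA, ihB]; ring

/-! ### Unique decoding -/

/-- Codes avoiding `x` are a prefix code once terminated by a step to `x`. -/
lemma word_prefix {x : V} {t t' : BinaryTree V} {v : V} {l l' : List V}
    (ht : IsCode G {x} v t) (ht' : IsCode G {x} v t')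
    (h : word v t ++ x :: l = word v t' ++ x :: l') : t = t' ∧ l = l' := by
  induction t generalizing t' v x l l' with
  | nil =>
    cases t' with
    | nil => simpa [word] using h
    | node u A B =>
      simp only [word, List.nil_append, List.cons_append, List.cons.injEq] at h
      exact absurd h.1.symm ht'.2.1
  | node u A B ihA ihB =>
    cases t' with
    | nil =>
      simp only [word, List.nil_append, List.cons_append, List.cons.injEq] at h
      exact absurd h.1 ht.2.1
    | node u' A' B' =>
      simp only [word, List.cons_append, List.append_assoc, List.cons.injEq] at h
      obtain ⟨rfl, h⟩ := h
      obtain ⟨rfl, h₁⟩ := ihA ht.2.2.1 ht'.2.2.1 h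
      obtain ⟨rfl, h₂⟩ := ihB ht.2.2.2 ht'.2.2.2 h₁
      exact ⟨rfl, h₂⟩

lemma word_inj {X : Set V} {t t' : BinaryTree V} {v : V}
    (ht : IsCode G X v t) (ht' : IsCode G X v t') (h : word v t = word v t') : t = t' := by
  induction t generalizing t' with
  | nil => cases t' with
    | nil => rfl
    | node u A B => simp [word] at h
  | node u A B ihA ihB =>
    cases t' with
    | nil => simp [word] at h
    | node u' A' B' =>
      simp only [word, List.cons.injEq] at h
      obtain ⟨rfl, h⟩ := h
      obtain ⟨rfl, h₁⟩ := word_prefix ht.2.2.1 ht'.2.2.1 h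
      rw [ihB ht.2.2.2 ht'.2.2.2 h₁]

/-! ### Counting codes -/

variable (G) in
/-- The Catalan decomposition of codes: the label of the root together with its two subtrees. -/
def codeSuccEquiv (X : Set V) (v : V) (n : ℕ) :
    Code G X v (n + 1) ≃ Σ a : (Finset.HasAntidiagonal.antidiagonal n) × {u // G.Adj v u ∧ u ∉ X},
      Code G {v} a.2.1 a.1.1.1 × Code G X v a.1.1.2 where
  toFun
    | ⟨.nil, h⟩ => absurd h.2 (by simp [numNodes])
    | ⟨.node u A B, h⟩ =>
      ⟨(⟨(A.numNodes, B.numNodes), by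
          have := h.2; simp only [numNodes] at this; simp; omega⟩, ⟨u, h.1.1, h.1.2.1⟩),
        ⟨A, h.1.2.2.1, rfl⟩, ⟨B, h.1.2.2.2, rfl⟩⟩
  invFun x := ⟨.node x.1.2.1 x.2.1.1 x.2.2.1,
    ⟨x.1.2.2.1, x.1.2.2.2, x.2.1.2.1, x.2.2.2.1⟩, by
      have := x.1.1.2
      rw [Finset.HasAntidiagonal.mem_antidiagonal] at this
      simp only [numNodes, x.2.1.2.2, x.2.2.2.2]; omega⟩
  left_inv := by
    rintro ⟨_ | ⟨u, A, B⟩, h⟩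
    · exact absurd h.2 (by simp [numNodes])
    · rfl
  right_inv := by
    rintro ⟨⟨⟨⟨i, j⟩, hij⟩, u, hu⟩, ⟨A, hA, hA'⟩, ⟨B, hB, hB'⟩⟩
    dsimp only at hA' hB'
    subst hA' hB'
    rfl

lemma card_zero (X : Set V) (v : V) : Nat.card (Code G X v 0) = 1 := by
  have : Unique (Code G X v 0) :=
    { default := ⟨.nil, trivial, rfl⟩
      uniq := by
        rintro ⟨_ | ⟨u, A, B⟩, h⟩
        · rfl
        · exact absurd h.2 (by simp [numNodes]) }
  exact Nat.card_unique

lemma finite_nbr {k : ℕ} (hk : 2 ≤ k) (hreg : ∀ v : V, (G.neighborSet v).ncard = k)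
    (X : Set V) (v : V) : Finite {u // G.Adj v u ∧ u ∉ X} := by
  have : (G.neighborSet v).Finite := Set.finite_of_ncard_pos (by rw [hreg]; omega)
  exact (this.subset (fun u hu => hu.1 : {u | G.Adj v u ∧ u ∉ X} ⊆ G.neighborSet v)).to_subtype

lemma finite_code {k : ℕ} (hk : 2 ≤ k) (hreg : ∀ v : V, (G.neighborSet v).ncard = k)
    (n : ℕ) (X : Set V) (v : V) : Finite (Code G X v n) := by
  induction n using Nat.strong_induction_on generalizing X v with
  | _ n ih =>
    cases n with
    | zero => exact Nat.finite_of_card_ne_zero (by rw [card_zero]; exact one_ne_zero)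
    | succ n =>
      have := finite_nbr hk hreg X v
      have (a : (Finset.HasAntidiagonal.antidiagonal n) × {u // G.Adj v u ∧ u ∉ X}) :
          Finite (Code G {v} a.2.1 a.1.1.1 × Code G X v a.1.1.2) := by
        have h := Finset.HasAntidiagonal.mem_antidiagonal.1 a.1.2
        have := ih a.1.1.1 (by omega) {v} a.2.1
        have := ih a.1.1.2 (by omega) X v
        infer_instance
      exact Finite.of_equiv _ (codeSuccEquiv G X v n).symm

open Classical in
lemma card_succ {k : ℕ} (hk : 2 ≤ k) (hreg : ∀ v : V, (G.neighborSet v).ncard = k)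
    (X : Set V) (v : V) (n : ℕ) [Fintype {u // G.Adj v u ∧ u ∉ X}] :
    Nat.card (Code G X v (n + 1)) = ∑ ij ∈ Finset.HasAntidiagonal.antidiagonal n,
      ∑ u : {u // G.Adj v u ∧ u ∉ X}, Nat.card (Code G {v} u.1 ij.1) *
        Nat.card (Code G X v ij.2) := by
  have (a : (Finset.HasAntidiagonal.antidiagonal n) × {u // G.Adj v u ∧ u ∉ X}) :
      Finite (Code G {v} a.2.1 a.1.1.1 × Code G X v a.1.1.2) := by
    have := finite_code hk hreg a.1.1.1 {v} a.2.1
    have := finite_code hk hreg a.1.1.2 X v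
    infer_instance
  rw [Nat.card_congr (codeSuccEquiv G X v n), Nat.card_sigma, Fintype.sum_prod_type]
  simp only [Nat.card_prod]
  exact Finset.sum_coe_sort (Finset.HasAntidiagonal.antidiagonal n) fun ij =>
    ∑ u : {u // G.Adj v u ∧ u ∉ X}, Nat.card (Code G {v} u.1 ij.1) * Nat.card (Code G X v ij.2)

lemma card_nbr_le {k : ℕ} (hk : 2 ≤ k) (hreg : ∀ v : V, (G.neighborSet v).ncard = k)
    (X : Set V) (v : V) : Nat.card {u // G.Adj v u ∧ u ∉ X} ≤ k := by
  have : (G.neighborSet v).Finite := Set.finite_of_ncard_pos (by rw [hreg]; omega)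
  rw [← hreg v]
  exact Set.ncard_le_ncard (fun u hu => hu.1 : {u | G.Adj v u ∧ u ∉ X} ⊆ G.neighborSet v) this

lemma le_card_nbr {k : ℕ} (hk : 2 ≤ k) (hreg : ∀ v : V, (G.neighborSet v).ncard = k)
    {X : Set V} (hX : X.Subsingleton) (v : V) :
    k - 1 ≤ Nat.card {u // G.Adj v u ∧ u ∉ X} := by
  have h := Set.ncard_le_ncard_sdiff_add_ncard (G.neighborSet v) X hX.finite
  have h1 : X.ncard ≤ 1 := (Set.ncard_le_one hX.finite).2 fun _ ha _ hb => hX ha hb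
  rw [hreg v] at h
  change k - 1 ≤ (G.neighborSet v \ X).ncard
  omega

lemma card_bounds {k : ℕ} (hk : 2 ≤ k) (hreg : ∀ v : V, (G.neighborSet v).ncard = k)
    (n : ℕ) {X : Set V} (hX : X.Subsingleton) (v : V) :
    catalan n * (k - 1) ^ n ≤ Nat.card (Code G X v n) ∧
      Nat.card (Code G X v n) ≤ catalan n * k ^ n := by
  induction n using Nat.strong_induction_on generalizing X v with
  | _ n ih =>
    cases n with
    | zero => simp [card_zero]
    | succ n =>
      have := finite_nbr hk hreg X v
      have := Fintype.ofFinite {u // G.Adj v u ∧ u ∉ X}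
      have hle := card_nbr_le hk hreg X v
      have hge := le_card_nbr hk hreg hX v
      rw [Nat.card_eq_fintype_card] at hle hge
      rw [card_succ hk hreg, catalan_succ', Finset.sum_mul, Finset.sum_mul]
      constructor <;> refine Finset.sum_le_sum fun ij hij => ?_ <;>
        have hij := Finset.HasAntidiagonal.mem_antidiagonal.1 hij
      · calc catalan ij.1 * catalan ij.2 * (k - 1) ^ (n + 1)
            = (k - 1) * ((catalan ij.1 * (k - 1) ^ ij.1) * (catalan ij.2 * (k - 1) ^ ij.2)) := by
              rw [← hij]; ring
          _ ≤ Fintype.card {u // G.Adj v u ∧ u ∉ X} *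
              ((catalan ij.1 * (k - 1) ^ ij.1) * (catalan ij.2 * (k - 1) ^ ij.2)) := by gcongr
          _ ≤ _ := by
            rw [← smul_eq_mul (Fintype.card _), ← Finset.card_univ]
            refine Finset.card_nsmul_le_sum _ _ _ fun u _ => ?_
            exact Nat.mul_le_mul (ih _ (by omega) Set.subsingleton_singleton _).1
              (ih _ (by omega) hX _).1
      · calc _ ≤ Fintype.card {u // G.Adj v u ∧ u ∉ X} *
              ((catalan ij.1 * k ^ ij.1) * (catalan ij.2 * k ^ ij.2)) := by
                rw [← smul_eq_mul (Fintype.card _), ← Finset.card_univ]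
                refine Finset.sum_le_card_nsmul _ _ _ fun u _ => ?_
                exact Nat.mul_le_mul (ih _ (by omega) Set.subsingleton_singleton _).2
                  (ih _ (by omega) hX _).2
          _ ≤ k * ((catalan ij.1 * k ^ ij.1) * (catalan ij.2 * k ^ ij.2)) := by gcongr
          _ = _ := by rw [← hij]; ring

/-- At the base point nothing is forbidden, so the first step has `k` choices. -/
lemma card_root_lower {k : ℕ} (hk : 2 ≤ k) (hreg : ∀ v : V, (G.neighborSet v).ncard = k)
    (n : ℕ) (v : V) :
    catalan (n + 1) * k * (k - 1) ^ n ≤ Nat.card (Code G ∅ v (n + 1)) := by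
  have := finite_nbr hk hreg ∅ v
  have := Fintype.ofFinite {u // G.Adj v u ∧ u ∉ (∅ : Set V)}
  have hc : Fintype.card {u // G.Adj v u ∧ u ∉ (∅ : Set V)} = k := by
    rw [← Nat.card_eq_fintype_card, ← hreg v]
    change {u | G.Adj v u ∧ u ∉ (∅ : Set V)}.ncard = _
    congr 1
    ext u
    simp
  rw [card_succ hk hreg, catalan_succ', Finset.sum_mul, Finset.sum_mul]
  refine Finset.sum_le_sum fun ij hij => ?_
  have hij := Finset.HasAntidiagonal.mem_antidiagonal.1 hij
  calc catalan ij.1 * catalan ij.2 * k * (k - 1) ^ n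
      = k * ((catalan ij.1 * (k - 1) ^ ij.1) * (catalan ij.2 * (k - 1) ^ ij.2)) := by
        rw [← hij]; ring
    _ = Fintype.card {u // G.Adj v u ∧ u ∉ (∅ : Set V)} *
          ((catalan ij.1 * (k - 1) ^ ij.1) * (catalan ij.2 * (k - 1) ^ ij.2)) := by rw [hc]
    _ ≤ _ := by
      rw [← smul_eq_mul (Fintype.card _), ← Finset.card_univ]
      refine Finset.card_nsmul_le_sum _ _ _ fun u _ => ?_
      exact Nat.mul_le_mul (card_bounds hk hreg _ Set.subsingleton_singleton _).1
        (card_bounds hk hreg _ Set.subsingleton_empty _).1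

/-! ### Codes and cycle-free walks -/

/-- A code spells a closed walk, and each node of the code contributes a single edge. -/
lemma exists_walk [DecidableEq V] {X : Set V} {v : V} {t : BinaryTree V} (ht : IsCode G X v t) :
    ∃ p : G.Walk v v, p.support = v :: word v t ∧ p.edges.toFinset.card ≤ t.numNodes := by
  induction t generalizing X v with
  | nil => exact ⟨.nil, rfl, by simp⟩
  | node u A B ihA ihB =>
    obtain ⟨h, -, hA, hB⟩ := ht
    obtain ⟨p, hp, hp'⟩ := ihA hA
    obtain ⟨q, hq, hq'⟩ := ihB hB
    refine ⟨.cons h (p.append (.cons h.symm q)), ?_, ?_⟩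
    · simp [word, Walk.support_append, hp, hq]
    · have : (Walk.cons h (p.append (.cons h.symm q))).edges.toFinset ⊆
          insert s(v, u) (p.edges.toFinset ∪ q.edges.toFinset) := by
        intro e
        simp only [Walk.edges_cons, Walk.edges_append, List.mem_toFinset,
          List.mem_cons, List.mem_append, Finset.mem_insert, Finset.mem_union, Sym2.eq_swap (a := u)]
        tauto
      refine (Finset.card_le_card this).trans ((Finset.card_insert_le _ _).trans ?_)
      have := Finset.card_union_le p.edges.toFinset q.edges.toFinset
      simp only [numNodes]
      omega

/-- Walks along edges of a subgraph `H` lift to `H.coe`. -/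
lemma exists_lift (H : G.Subgraph) {a b : V} (c : G.Walk a b) (ha : a ∈ H.verts)
    (hc : ∀ e ∈ c.edges, e ∈ H.edgeSet) :
    ∃ (hb : b ∈ H.verts) (c' : H.coe.Walk ⟨a, ha⟩ ⟨b, hb⟩), c'.map H.hom = c := by
  induction c with
  | nil => exact ⟨ha, .nil, rfl⟩
  | @cons a w b h q ih =>
    have haw : H.Adj a w := hc s(a, w) (by simp)
    obtain ⟨hb, c', hc'⟩ := ih (H.edge_vert haw.symm) fun e he => hc e (by simp [he])
    refine ⟨hb, .cons (show H.coe.Adj ⟨a, ha⟩ ⟨w, H.edge_vert haw.symm⟩ from haw) c', ?_⟩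
    rw [Walk.map_cons, hc']
    rfl

/-- Acyclicity of the traversed subgraph, phrased inside the ambient graph. -/
lemma acyclic_iff {v w : V} (p : G.Walk v w) : p.toSubgraph.coe.IsAcyclic ↔
    ∀ (x : V) (c : G.Walk x x), c.IsCycle → ¬ c.edges ⊆ p.edges := by
  constructor
  · intro h x c hc hsub
    have hx : x ∈ p.toSubgraph.verts := by
      cases c with
      | nil => exact absurd hc Walk.not_isCycle_nil
      | @cons _ y _ h' q =>
        rw [Walk.mem_verts_toSubgraph]
        exact p.fst_mem_support_of_mem_edges (hsub (a := s(x, y)) (by simp))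
    obtain ⟨hb, c', rfl⟩ := exists_lift p.toSubgraph c hx fun e he =>
      p.mem_edges_toSubgraph.2 (hsub he)
    exact h c' ((Walk.isCycle_map_iff_of_injective
      SimpleGraph.Subgraph.hom_injective).1 hc)
  · intro h x c hc
    refine h _ (c.map p.toSubgraph.hom) (hc.map SimpleGraph.Subgraph.hom_injective) ?_
    intro e he
    rw [Walk.edges_map, List.mem_map] at he
    obtain ⟨e', he', rfl⟩ := he
    have := c.edges_subset_edgeSet he'
    induction e' with
    | _ a b => exact p.mem_edges_toSubgraph.1 this

/-- A cycle among at most `s` edges would have length between `max 3 (2 * s - 1)` and `s`. -/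
lemma acyclic_of_card [DecidableEq V] {s : ℕ} (hgirth : ((2 * s - 1 : ℕ) : ℕ∞) ≤ G.egirth)
    {v : V} (p : G.Walk v v) (hp : p.edges.toFinset.card ≤ s) :
    p.toSubgraph.coe.IsAcyclic := by
  rw [acyclic_iff]
  intro x c hc hsub
  have h1 : c.length ≤ s := by
    rw [← c.length_edges, ← List.toFinset_card_of_nodup hc.edges_nodup]
    refine (Finset.card_le_card fun e he => ?_).trans hp
    rw [List.mem_toFinset] at he ⊢
    exact hsub he
  have h2 : 2 * s - 1 ≤ c.length := by exact_mod_cast SimpleGraph.le_egirth.1 hgirth x c hc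
  have := hc.three_le_length
  omega

/-- A cycle-free closed walk is spelled by a code: the first return to the base point must reverse
the first step, and the two pieces cut off there are again cycle-free closed walks. -/
lemma exists_code {X : Set V} {v : V} (p : G.Walk v v)
    (hp : ∀ (x : V) (c : G.Walk x x), c.IsCycle → ¬ c.edges ⊆ p.edges)
    (hX : ∀ x ∈ X, x ∉ p.support) :
    ∃ t, IsCode G X v t ∧ p.support = v :: word v t := by
  classical
  induction hn : p.length using Nat.strong_induction_on generalizing X v p with
  | _ n ih =>
    cases p with
    | nil => exact ⟨.nil, trivial, rfl⟩
    | @cons _ u _ h q =>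
      have hv : v ∈ q.support := q.end_mem_support
      obtain ⟨w, A, hw, hA⟩ : ∃ (w : V) (A : G.Walk u w) (hw : G.Adj w v),
          q.takeUntil v hv = A.concat hw := by
        rcases hq : q.takeUntil v hv with _ | ⟨h', r⟩
        · exact absurd h (G.irrefl)
        · obtain ⟨w, A, hw, e⟩ := Walk.exists_cons_eq_concat h' r
          exact ⟨w, A, hw, e⟩
      have hvA : v ∉ A.support := by
        have := q.count_support_takeUntil_eq_one hv
        rw [hA, Walk.support_concat] at this
        simpa [List.count_append, List.count_eq_zero] using this
      have hq : q = (A.concat hw).append (q.dropUntil v hv) := by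
        rw [← hA, q.take_spec]
      generalize q.dropUntil v hv = B at hq
      subst hq
      -- Otherwise `v → u`, a path from `u` to `w` inside `A`, and `w → v` would form a cycle.
      obtain rfl : w = u := by
        by_contra hwu
        refine hp v (.cons h (A.bypass.concat hw)) ?_ ?_
        · rw [Walk.cons_isCycle_iff, Walk.concat_isPath_iff]
          refine ⟨⟨A.bypass_isPath, fun h' => hvA (A.support_bypass_subset_support h')⟩, fun h' => ?_⟩
          rw [Walk.edges_concat, List.concat_eq_append, List.mem_append,
            List.mem_singleton] at h'
          rcases h' with h' | h'
          · exact hvA (A.fst_mem_support_of_mem_edges (A.edges_bypass_subset_edges h'))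
          · rw [Sym2.eq_swap, Sym2.congr_left] at h'
            exact hwu h'.symm
        · intro e he
          simp only [Walk.edges_cons, Walk.edges_concat,
            Walk.edges_append, List.concat_eq_append, List.mem_cons, List.mem_append,
            List.not_mem_nil, or_false] at he ⊢
          have := @Walk.edges_bypass_subset_edges _ _ _ _ _ A e
          tauto
      simp only [Walk.length_cons, Walk.length_append,
        Walk.length_concat] at hn
      obtain ⟨s, hs, hs'⟩ := ih A.length (by omega) (X := {v}) A
        (fun x c hc hsub => hp x c hc fun e he => by simp [hsub he])
        (by simpa using hvA) rfl
      obtain ⟨t, ht, ht'⟩ := ih B.length (by omega) (X := X) B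
        (fun x c hc hsub => hp x c hc fun e he => by simp [hsub he])
        (fun x hx hxB => hX x hx (by
          rw [Walk.support_cons, List.mem_cons, Walk.mem_support_append_iff]
          exact .inr (.inr hxB))) rfl
      refine ⟨.node w s t, ⟨h, fun hwX => hX w hwX (by simp), hs, ht⟩, ?_⟩
      simp [Walk.support_append, Walk.support_concat, hs', ht', word]

lemma count_eq {s : ℕ} (hgirth : ((2 * s - 1 : ℕ) : ℕ∞) ≤ G.egirth) (v : V) :
    G.cycleFreeClosedWalkCount v (2 * s) = Nat.card (Code G ∅ v s) := by
  classical
  have key (t : Code G ∅ v s) : ∃ p : {p : G.Walk v v // p.length = 2 * s ∧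
      p.toSubgraph.coe.IsAcyclic}, p.1.support = v :: word v t.1 := by
    obtain ⟨t, ht, rfl⟩ := t
    obtain ⟨p, hp, hp'⟩ := exists_walk ht
    refine ⟨⟨p, ?_, acyclic_of_card hgirth p hp'⟩, hp⟩
    have := p.length_support
    rw [hp, List.length_cons, length_word] at this
    omega
  choose f hf using key
  refine (Nat.card_congr (Equiv.ofBijective f ⟨fun t t' h => ?_, fun p => ?_⟩)).symm
  · have h1 := hf t
    rw [h, hf t', List.cons.injEq] at h1
    exact Subtype.ext (word_inj t.2.1 t'.2.1 h1.2.symm)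
  · obtain ⟨p, hl, hp⟩ := p
    obtain ⟨t, ht, hpt⟩ := exists_code (X := ∅) p ((acyclic_iff p).1 hp) (by simp)
    have hn : t.numNodes = s := by
      have := p.length_support
      rw [hpt, List.length_cons, length_word] at this
      omega
    refine ⟨⟨t, ht, hn⟩, Subtype.ext (Walk.ext_support ?_)⟩
    rw [hf, hpt]

end CycleFreeWalk

/-- Let `s ≥ 1`, `k ≥ 2` and let `G` be a `k`-regular simple graph of girth at least
`2s - 1`. Then for every vertex `v`, the number `N` of cycle-free closed walks of
length `2s` based at `v` satisfies `C_s · k · (k-1)^(s-1) ≤ N ≤ C_s · k^s`, where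
`C_s` is the `s`-th Catalan number. -/
theorem cycleFree_closedWalk_count_bounds (s k : ℕ) (hs : 1 ≤ s) (hk : 2 ≤ k)
    {V : Type*} (G : SimpleGraph V) (hreg : ∀ v : V, (G.neighborSet v).ncard = k)
    (hgirth : ((2 * s - 1 : ℕ) : ℕ∞) ≤ G.egirth) (v : V) :
    catalan s * k * (k - 1) ^ (s - 1) ≤ G.cycleFreeClosedWalkCount v (2 * s) ∧
      G.cycleFreeClosedWalkCount v (2 * s) ≤ catalan s * k ^ s := by
  rw [CycleFreeWalk.count_eq hgirth]
  refine ⟨?_, (CycleFreeWalk.card_bounds hk hreg s Set.subsingleton_empty v).2⟩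
  obtain ⟨n, rfl⟩ := Nat.exists_eq_add_of_le' hs
  exact CycleFreeWalk.card_root_lower hk hreg n v
end
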